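/- arXiv:1508.02014 — 2 statements merged into one kernel-verified Lean document; each statement's English description precedes it below -/
import Mathlib

section
/- Let n ≥ 2, let q : ℝ^n_+ → ℝ satisfy the cost-function conditions, let c ∈ ℝ^n_+, set α = c_1 + ⋯ + c_n, and let h ∈ L^1_α(ℝ^1_+) ∩ L^2_α(ℝ^1_+). Then the operator R^h_q is injective on L^2_{I−c}(ℝ^n_+) (i.e., if f ∈ L^2_{I−c}(ℝ^n_+) and (R^h_q f)(p) = 0 for all p ∈ ℝ^n_+, then f = 0 a.e.) if and only if the set { ξ ∈ ℝ^n : (M e^{−q})(c + iξ) = 0 } has Lebesgue measure zero in ℝ^n and the set { τ ∈ ℝ : (Mh)(α + iτ) = 0 } has Lebesgue measure zero in ℝ. -/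
open MeasureTheory Complex Set

noncomputable section

/-- The positive orthant `ℝ^n_+`. -/
def posOrth (n : ℕ) : Set (Fin n → ℝ) := {x | ∀ i, 0 < x i}

/-- `q` satisfies the cost-function conditions: `C¹` on `ℝ^n_+`, positive,
positively homogeneous of degree one, with bounded level sets. -/
def IsCostFun (n : ℕ) (q : (Fin n → ℝ) → ℝ) : Prop :=
  ContDiffOn ℝ 1 q (posOrth n) ∧
  (∀ x ∈ posOrth n, 0 < q x) ∧
  (∀ lam : ℝ, 0 < lam → ∀ x ∈ posOrth n, q (fun i => lam * x i) = lam * q x) ∧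
  (∀ t : ℝ, Bornology.IsBounded {x | x ∈ posOrth n ∧ q x = t})

/-- The `n`-dimensional Mellin transform `(Mg)(z) = ∫_{ℝ^n_+} x^{z-I} g(x) dx`. -/
def mellinT (n : ℕ) (g : (Fin n → ℝ) → ℝ) (z : Fin n → ℂ) : ℂ :=
  ∫ x in posOrth n, (∏ i, (x i : ℂ) ^ (z i - 1)) * g x

/-- Membership in `L²_c(ℝ^n_+)`: measurable with `∫ |f|² x^{2c-I} < ∞`. -/
def MemL2w (n : ℕ) (c : Fin n → ℝ) (f : (Fin n → ℝ) → ℝ) : Prop :=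
  AEStronglyMeasurable f (volume.restrict (posOrth n)) ∧
  IntegrableOn (fun x => |f x| ^ 2 * ∏ i, x i ^ (2 * c i - 1)) (posOrth n)

/-- Membership in `L¹_α(ℝ¹_+)`: measurable with `∫_0^∞ |h(t)| t^{α-1} dt < ∞`. -/
def MemL1w1 (α : ℝ) (h : ℝ → ℝ) : Prop :=
  IntegrableOn (fun t => h t * t ^ (α - 1)) (Ioi (0 : ℝ))

/-- Membership in `L²_α(ℝ¹_+)`: measurable with `∫_0^∞ |h(t)|² t^{2α-1} dt < ∞`. -/
def MemL2w1 (α : ℝ) (h : ℝ → ℝ) : Prop :=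
  AEStronglyMeasurable h (volume.restrict (Ioi (0 : ℝ))) ∧
  IntegrableOn (fun t => |h t| ^ 2 * t ^ (2 * α - 1)) (Ioi (0 : ℝ))

/-- The operator `(R^h_q f)(p) = ∫_{ℝ^n_+} h(q(p₁x₁,…,pₙxₙ)) f(x) dx`. -/
def Rhq (n : ℕ) (q : (Fin n → ℝ) → ℝ) (h : ℝ → ℝ) (f : (Fin n → ℝ) → ℝ)
    (p : Fin n → ℝ) : ℝ :=
  ∫ x in posOrth n, h (q (fun i => p i * x i)) * f x

/-!
In logarithmic coordinates `x = exp y`, with the weights absorbed into the functions, `L²_{I-c}`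
becomes `L²(ℝⁿ)` and `R^h_q` becomes cross-correlation with the kernel `h(q(exp y)) exp(c · y)`,
which lies in `L¹ ∩ L²`. By Plancherel such an operator is injective exactly when the Fourier
transform of its kernel is nonzero almost everywhere, and this Fourier transform is
`ξ ↦ M(h ∘ q)(c + iξ)`.

The zeros are found from the factorization `M(h ∘ q)(z) Γ(∑ z) = M(e^{-q})(z) (Mh)(∑ z)`. By
homogeneity, `Q = log q` satisfies `Q(y + t(1, …, 1)) = Q y + t`, so the volume-preserving
involution `(y, t) ↦ (y + (t - Q y)(1, …, 1), Q y)` of `ℝⁿ × ℝ` exchanges `Q y` and `t` without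
changing the product of the exponential weights; it thus exchanges the roles of `h` and `e^{-t}`.
The same involution, applied to moduli, gives the integrability of the kernel. Since `Γ` has no
zeros, the zero set is the union of that of `M(e^{-q})` and the preimage under `ξ ↦ ∑ ξ` of that
of `Mh`, and this preimage is null exactly when the latter is.
-/

section Shear

variable {E : Type*} [AddCommGroup E] [Module ℝ E] [MeasurableSpace E] [MeasurableAdd₂ E]
  [MeasurableSMul₂ ℝ E]

/-- The involution `(y, t) ↦ (y + (t - Q y) • e, Q y)` of `E × ℝ`, for a function `Q` that grows
at unit speed in the direction `e`. It exchanges the functions `(y, t) ↦ Q y` and `(y, t) ↦ t`. -/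
def heightSwap (Q : E → ℝ) (e : E) (hQ : Measurable Q)
    (hQe : ∀ y t, Q (y + t • e) = Q y + t) : E × ℝ ≃ᵐ E × ℝ :=
  MeasurableEquiv.ofInvolutive (fun p ↦ (p.1 + (p.2 - Q p.1) • e, Q p.1))
    (fun p ↦ by ext <;> simp [hQe, add_assoc, ← add_smul]) (by fun_prop)

variable {μ : Measure E} [SFinite μ] [μ.IsAddRightInvariant] {Q : E → ℝ} {e : E}

theorem heightSwap_apply (hQ : Measurable Q) (hQe : ∀ y t, Q (y + t • e) = Q y + t) (p : E × ℝ) :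
    heightSwap Q e hQ hQe p = (p.1 + (p.2 - Q p.1) • e, Q p.1) :=
  rfl

theorem measurePreserving_heightSwap (hQ : Measurable Q)
    (hQe : ∀ y t, Q (y + t • e) = Q y + t) :
    MeasurePreserving (heightSwap Q e hQ hQe) (μ.prod volume) (μ.prod volume) := by
  have sub_height : MeasurePreserving (fun p : E × ℝ ↦ (p.1, p.2 - Q p.1))
      (μ.prod volume) (μ.prod volume) :=
    (MeasurePreserving.id μ).skew_product (g := fun y t ↦ t - Q y) (by fun_prop)
      (.of_forall fun y ↦ map_sub_right_eq_self volume (Q y))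
  have shear : MeasurePreserving (fun p : E × ℝ ↦ (p.1 + p.2 • e, p.2))
      (μ.prod volume) (μ.prod volume) := by
    have swapped := (MeasurePreserving.id (volume : Measure ℝ)).skew_product
      (μc := μ) (μd := μ) (g := fun t y ↦ y + t • e) (by fun_prop)
      (.of_forall fun t ↦ map_add_right_eq_self μ (t • e))
    exact (Measure.measurePreserving_swap.comp swapped).comp Measure.measurePreserving_swap
  have height_sub : MeasurePreserving (fun p : E × ℝ ↦ (p.1, Q p.1 - p.2))
      (μ.prod volume) (μ.prod volume) :=
    (MeasurePreserving.id μ).skew_product (g := fun y t ↦ Q y - t) (by fun_prop)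
      (.of_forall fun y ↦ (Measure.measurePreserving_sub_left volume (Q y)).map_eq)
  convert height_sub.comp (shear.comp sub_height) using 1
  ext p <;> simp [heightSwap_apply, hQe]

variable {𝕜 : Type*} [RCLike 𝕜] {w : E → 𝕜}

theorem comp_heightSwap_mul (hQ : Measurable Q) (hQe : ∀ y t, Q (y + t • e) = Q y + t)
    (hw : ∀ x y, w (x + y) = w x * w y) (G₁ G₂ : ℝ → 𝕜) (p : E × ℝ) :
    (fun p : E × ℝ ↦ G₂ (Q p.1) * w p.1 * (G₁ p.2 * w (p.2 • e))) (heightSwap Q e hQ hQe p) =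
      G₁ (Q p.1) * w p.1 * (G₂ p.2 * w (p.2 • e)) := by
  have weight : w (p.1 + (p.2 - Q p.1) • e) * w (Q p.1 • e) = w p.1 * w (p.2 • e) := by
    rw [← hw, ← hw, add_assoc, ← add_smul, sub_add_cancel]
  simp only [heightSwap_apply, hQe, add_sub_cancel]
  linear_combination G₂ p.2 * G₁ (Q p.1) * weight

theorem integral_comp_mul_integral_eq_swap (μ : Measure E) [SFinite μ] [μ.IsAddRightInvariant]
    (hQ : Measurable Q) (hQe : ∀ y t, Q (y + t • e) = Q y + t)
    (hw : ∀ x y, w (x + y) = w x * w y) (G₁ G₂ : ℝ → 𝕜) :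
    (∫ y, G₁ (Q y) * w y ∂μ) * ∫ t, G₂ t * w (t • e) =
      (∫ y, G₂ (Q y) * w y ∂μ) * ∫ t, G₁ t * w (t • e) := by
  rw [← integral_prod_mul, ← integral_prod_mul,
    ← (measurePreserving_heightSwap hQ hQe).integral_comp']
  exact integral_congr_ae (.of_forall fun p ↦ comp_heightSwap_mul hQ hQe hw G₂ G₁ p)

theorem integrable_comp_mul_of_integrable (hQ : Measurable Q)
    (hQe : ∀ y t, Q (y + t • e) = Q y + t) (hw : ∀ x y, w (x + y) = w x * w y) {G₁ G₂ : ℝ → 𝕜}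
    (hG₁ : Integrable fun t ↦ G₁ t * w (t • e)) (hG₂ : Integrable (fun y ↦ G₂ (Q y) * w y) μ)
    (hG₂_ne : ∀ t, G₂ t * w (t • e) ≠ 0) : Integrable (fun y ↦ G₁ (Q y) * w y) μ := by
  have integrable_prod := (measurePreserving_heightSwap hQ hQe).integrable_comp_of_integrable
    (hG₂.mul_prod hG₁)
  have sections := Integrable.prod_left_ae <| integrable_prod.congr <|
    .of_forall (comp_heightSwap_mul hQ hQe hw G₁ G₂)
  obtain ⟨t, ht⟩ := sections.exists
  exact (integrable_mul_const_iff (hG₂_ne t).isUnit _).1 ht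

end Shear

section Fourier

open FourierTransform SchwartzMap

variable {V F : Type*} [NormedAddCommGroup V] [InnerProductSpace ℝ V] [FiniteDimensional ℝ V]
  [MeasurableSpace V] [BorelSpace V]

section NormedSpace

variable [NormedAddCommGroup F] [NormedSpace ℂ F]

theorem continuous_fourier {f : V → F} (hf : Integrable f) : Continuous (𝓕 f) :=
  VectorFourier.fourierIntegral_continuous Real.continuous_fourierChar continuous_inner hf

theorem fourier_comp_add_left (f : V → F) (s ξ : V) :
    𝓕 (fun y ↦ f (s + y)) ξ = Real.fourierChar (inner ℝ s ξ) • 𝓕 f ξ := by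
  simp only [add_comm s]
  exact congrFun (VectorFourier.fourierIntegral_comp_add_right _ volume (innerₗ V) f s) ξ

variable [CompleteSpace F]

theorem integral_fourier_smul_eq_integral_smul_fourier {f : V → ℂ} {g : V → F}
    (hf : Integrable f) (hg : Integrable g) : ∫ x, 𝓕 f x • g x = ∫ x, f x • 𝓕 g x := by
  have flip := VectorFourier.integral_fourierIntegral_smul_eq_flip (L := innerₗ V)
    Real.continuous_fourierChar continuous_inner hf hg
  rwa [flip_innerₗ] at flip

theorem ae_eq_of_integral_schwartz_smul_eq {f g : V → F} (hf : LocallyIntegrable f)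
    (hg : LocallyIntegrable g) (hfg : ∀ φ : 𝓢(V, ℂ), ∫ x, φ x • f x = ∫ x, φ x • g x) :
    f =ᵐ[volume] g := by
  refine ae_eq_of_integral_contDiff_smul_eq hf hg fun θ hθ hθ_supp ↦ ?_
  have hθ_supp' : HasCompactSupport fun x ↦ (θ x : ℂ) := hθ_supp.comp_left ofReal_zero
  exact hfg (hθ_supp'.toSchwartzMap (ofRealCLM.contDiff.comp hθ))

theorem ae_eq_zero_of_fourier_eq_zero {f : V → F} (hf : Integrable f) (h𝓕 : 𝓕 f = 0) :
    f =ᵐ[volume] 0 := by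
  refine ae_eq_of_integral_schwartz_smul_eq hf.locallyIntegrable
    (integrable_zero V F volume).locallyIntegrable fun φ ↦ ?_
  calc ∫ x, φ x • f x = ∫ x, 𝓕 (𝓕⁻ φ : 𝓢(V, ℂ)) x • f x := by rw [fourier_fourierInv_eq]
    _ = ∫ x, (𝓕⁻ φ : 𝓢(V, ℂ)) x • 𝓕 f x :=
      integral_fourier_smul_eq_integral_smul_fourier (SchwartzMap.integrable _) hf
    _ = ∫ x, φ x • (0 : V → F) x := by simp [h𝓕]

end NormedSpace

section HilbertSpace

variable [NormedAddCommGroup F] [InnerProductSpace ℂ F] [CompleteSpace F]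

theorem coeFn_fourier_toLp_ae_eq {f : V → F} (hf : Integrable f) (hf₂ : MemLp f 2) :
    ((𝓕 (hf₂.toLp f) : Lp F 2 (volume : Measure V)) : V → F) =ᵐ[volume] 𝓕 f := by
  refine ae_eq_of_integral_schwartz_smul_eq ((Lp.memLp _).locallyIntegrable one_le_two)
    (continuous_fourier hf).locallyIntegrable fun φ ↦ ?_
  have as_distribution :=
    DFunLike.congr_fun (Lp.fourier_toTemperedDistribution_eq (hf₂.toLp f)) φ
  simp only [TemperedDistribution.fourier_apply, Lp.toTemperedDistribution_apply]
    at as_distribution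
  calc _ = ∫ x, (𝓕 φ) x • hf₂.toLp f x := as_distribution.symm
    _ = ∫ x, (𝓕 φ) x • f x := integral_congr_ae <| by
      filter_upwards [hf₂.coeFn_toLp] with x hx
      rw [hx]
    _ = ∫ x, φ x • 𝓕 f x :=
      integral_fourier_smul_eq_integral_smul_fourier (SchwartzMap.integrable φ) hf

theorem memLp_two_fourier {f : V → F} (hf : Integrable f) (hf₂ : MemLp f 2) :
    MemLp (𝓕 f) 2 :=
  (memLp_congr_ae (coeFn_fourier_toLp_ae_eq hf hf₂)).1 (Lp.memLp _)

theorem integral_inner_comp_add_left_eq_fourierInv {u : V → F} (hu : Integrable u)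
    (hu₂ : MemLp u 2) (v : Lp F 2 (volume : Measure V)) (s : V) :
    ∫ y, inner ℂ (v y) (u (s + y)) =
      𝓕⁻ (fun ξ ↦ inner ℂ ((𝓕 v : Lp F 2 (volume : Measure V)) ξ) (𝓕 u ξ)) s := by
  have hτ : Integrable fun y ↦ u (s + y) := hu.comp_add_left s
  have hτ₂ : MemLp (fun y ↦ u (s + y)) 2 :=
    hu₂.comp_measurePreserving (measurePreserving_add_left volume s)
  calc ∫ y, inner ℂ (v y) (u (s + y)) = inner ℂ v (hτ₂.toLp _) := by
        refine (integral_congr_ae ?_).trans (L2.inner_def _ _).symm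
        filter_upwards [hτ₂.coeFn_toLp] with y hy
        rw [hy]
    _ = inner ℂ (𝓕 v) (𝓕 (hτ₂.toLp _)) := (Lp.inner_fourier_eq _ _).symm
    _ = _ := by
        rw [L2.inner_def, Real.fourierInv_eq]
        refine integral_congr_ae ?_
        filter_upwards [coeFn_fourier_toLp_ae_eq hτ hτ₂] with ξ hξ
        rw [hξ, fourier_comp_add_left, Circle.smul_def, inner_smul_right, real_inner_comm s,
          Circle.smul_def, smul_eq_mul]

end HilbertSpace

theorem fourier_comp_ofLp {ι : Type*} [Fintype ι] (u : (ι → ℝ) → ℂ) (ξ : ι → ℝ) :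
    𝓕 (fun y : EuclideanSpace ℝ ι ↦ u y.ofLp) (WithLp.toLp 2 (-(2 * Real.pi)⁻¹ • ξ)) =
      ∫ y, u y * cexp (I * (ξ ⬝ᵥ y : ℝ)) := by
  have he := EuclideanSpace.volume_preserving_symm_measurableEquiv_toLp ι
  rw [Real.fourier_eq', ← he.integral_comp']
  refine integral_congr_ae (.of_forall fun y ↦ ?_)
  have phase : -2 * Real.pi * inner ℝ y (WithLp.toLp 2 (-(2 * Real.pi)⁻¹ • ξ)) = ξ ⬝ᵥ y.ofLp := by
    simp only [EuclideanSpace.inner_eq_star_dotProduct, star_trivial, smul_dotProduct, smul_eq_mul]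
    field_simp
  simp only [phase, smul_eq_mul]
  rw [mul_comm, mul_comm (I : ℂ)]
  rfl

end Fourier

/-- A kernel `u` is correlation injective over `𝕜` if no nonzero `v ∈ L²` has vanishing
cross-correlation `s ↦ ∫ conj (v y) u(s + y) dy`. The cross-correlation is required to vanish
everywhere, not just almost everywhere. -/
def CorrelationInjective (𝕜 : Type*) [RCLike 𝕜] {G : Type*} [Add G] [MeasureSpace G]
    (u : G → 𝕜) : Prop :=
  ∀ v : G → 𝕜, MemLp v 2 → (∀ s, ∫ y, inner 𝕜 (v y) (u (s + y)) = 0) → v =ᵐ[volume] 0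

namespace CorrelationInjective

open FourierTransform

section Fourier

variable {V : Type*} [NormedAddCommGroup V] [InnerProductSpace ℝ V] [FiniteDimensional ℝ V]
  [MeasurableSpace V] [BorelSpace V]

theorem of_volume_fourier_zeros {u : V → ℂ} (hu : Integrable u) (hu₂ : MemLp u 2)
    (hnull : volume {ξ | 𝓕 u ξ = 0} = 0) : CorrelationInjective ℂ u := by
  intro v hv hv_zero
  set v' : Lp ℂ 2 (volume : Measure V) := hv.toLp v
  set w : V → ℂ := fun ξ ↦ inner ℂ ((𝓕 v' : Lp ℂ 2 (volume : Measure V)) ξ) (𝓕 u ξ)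
  have fourierInv_w (s : V) : 𝓕⁻ w s = 0 := by
    rw [← integral_inner_comp_add_left_eq_fourierInv hu hu₂ v' s, ← hv_zero s]
    refine integral_congr_ae ?_
    filter_upwards [hv.coeFn_toLp] with y hy
    rw [hy]
  have w_integrable : Integrable w := (memLp_two_fourier hu hu₂).integrable_mul (Lp.memLp _).star
  have w_zero : w =ᵐ[volume] 0 := ae_eq_zero_of_fourier_eq_zero w_integrable <| by
    ext ξ
    rw [← neg_neg ξ, ← Real.fourierInv_eq_fourier_neg, fourierInv_w, Pi.zero_apply]
  have fourier_v : (𝓕 v' : Lp ℂ 2 (volume : Measure V)) = 0 := by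
    rw [Lp.eq_zero_iff_ae_eq_zero]
    filter_upwards [w_zero, measure_eq_zero_iff_ae_notMem.1 hnull] with ξ hwξ huξ
    exact ((mul_eq_zero.1 hwξ).resolve_left huξ |> star_eq_zero.1)
  have v_zero : v' = 0 := by rw [← norm_eq_zero, ← Lp.norm_fourier_eq, fourier_v, norm_zero]
  exact hv.coeFn_toLp.symm.trans ((Lp.eq_zero_iff_ae_eq_zero).1 v_zero)

theorem volume_fourier_zeros {u : V → ℂ} (hu : Integrable u) (hu₂ : MemLp u 2)
    (hinj : CorrelationInjective ℂ u) : volume {ξ | 𝓕 u ξ = 0} = 0 := by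
  by_contra hpos
  have zeros_measurable : MeasurableSet {ξ | 𝓕 u ξ = 0} :=
    (isClosed_eq (continuous_fourier hu) continuous_const).measurableSet
  obtain ⟨E, hE, hE_sub, hE_pos, hE_fin⟩ :=
    Measure.exists_subset_measure_lt_top zeros_measurable (pos_iff_ne_zero.2 hpos)
  let g : Lp ℂ 2 (volume : Measure V) := indicatorConstLp 2 hE hE_fin.ne (1 : ℂ)
  let v : Lp ℂ 2 (volume : Measure V) := 𝓕⁻ g
  have fourier_v : 𝓕 v = g := fourier_fourierInv_eq g
  have correlation_zero (s : V) : ∫ y, inner ℂ (v y) (u (s + y)) = 0 := by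
    rw [integral_inner_comp_add_left_eq_fourierInv hu hu₂, fourier_v, Real.fourierInv_eq]
    refine integral_eq_zero_of_ae ?_
    have coeFn_g : g =ᵐ[volume] E.indicator fun _ ↦ (1 : ℂ) := indicatorConstLp_coeFn
    filter_upwards [coeFn_g] with ξ hξ
    by_cases hξE : ξ ∈ E
    · simp [show 𝓕 u ξ = 0 from hE_sub hξE]
    · simp [hξ, hξE]
  have v_zero : v = 0 := (Lp.eq_zero_iff_ae_eq_zero).2 (hinj v (Lp.memLp v) correlation_zero)
  have g_zero : g = 0 := by
    rw [← fourier_v, v_zero]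
    exact map_zero (Lp.fourierTransformₗᵢ V ℂ)
  have norm_g : ‖g‖ = volume.real E ^ (1 / 2 : ℝ) := by
    simp [g, norm_indicatorConstLp two_ne_zero ENNReal.ofNat_ne_top]
  rw [g_zero, norm_zero, eq_comm, Real.rpow_eq_zero measureReal_nonneg (by norm_num)] at norm_g
  exact hE_pos.ne' ((measureReal_eq_zero_iff hE_fin.ne).1 norm_g)

theorem iff_volume_fourier_zeros {u : V → ℂ} (hu : Integrable u) (hu₂ : MemLp u 2) :
    CorrelationInjective ℂ u ↔ volume {ξ | 𝓕 u ξ = 0} = 0 :=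
  ⟨volume_fourier_zeros hu hu₂, of_volume_fourier_zeros hu hu₂⟩

end Fourier

variable {G H : Type*} [MeasureSpace G] [MeasureSpace H]

theorem comp_measurableEquiv {𝕜 : Type*} [RCLike 𝕜] [Add G] [Add H] {u : G → 𝕜}
    (hinj : CorrelationInjective 𝕜 u) (e : H ≃ᵐ G) (he : MeasurePreserving e)
    (map_add : ∀ x y, e (x + y) = e x + e y) : CorrelationInjective 𝕜 (u ∘ e) := by
  intro v hv hv_zero
  have correlation_zero (s : G) : ∫ y, inner 𝕜 (v (e.symm y)) (u (s + y)) = 0 := by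
    rw [← hv_zero (e.symm s), ← he.integral_comp']
    simp [map_add]
  have v_symm_zero := hinj _ (hv.comp_measurePreserving he.symm) correlation_zero
  filter_upwards [he.quasiMeasurePreserving.ae v_symm_zero] with y hy
  simpa using hy

theorem comp_measurableEquiv_iff {𝕜 : Type*} [RCLike 𝕜] [Add G] [Add H] {u : G → 𝕜}
    (e : H ≃ᵐ G) (he : MeasurePreserving e) (map_add : ∀ x y, e (x + y) = e x + e y) :
    CorrelationInjective 𝕜 (u ∘ e) ↔ CorrelationInjective 𝕜 u := by
  refine ⟨fun hinj ↦ ?_, fun hinj ↦ hinj.comp_measurableEquiv e he map_add⟩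
  have symm_add (x y : G) : e.symm (x + y) = e.symm x + e.symm y := by
    rw [e.symm_apply_eq, map_add, e.apply_symm_apply, e.apply_symm_apply]
  simpa [Function.comp_assoc] using hinj.comp_measurableEquiv e.symm he.symm symm_add

theorem ofReal_iff [AddGroup G] [MeasurableAdd G] [(volume : Measure G).IsAddLeftInvariant]
    {u : G → ℝ} (hu : MemLp u 2) :
    CorrelationInjective ℂ (fun y ↦ (u y : ℂ)) ↔ CorrelationInjective ℝ u := by
  constructor
  · intro hinj v hv hv_zero
    have ofReal_v_zero := hinj (fun y ↦ (v y : ℂ)) hv.ofReal fun s ↦ by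
      have key := congrArg (fun x : ℝ ↦ (x : ℂ)) (hv_zero s)
      rw [← integral_complex_ofReal] at key
      simpa using key
    filter_upwards [ofReal_v_zero] with y hy
    exact ofReal_eq_zero.1 hy
  · intro hinj v hv hv_zero
    have integrable_correlation (s : G) : Integrable fun y ↦ inner ℂ (v y) (u (s + y) : ℂ) :=
      (hu.comp_measurePreserving (measurePreserving_add_left volume s)).ofReal.integrable_mul
        hv.star
    have re_zero := hinj (fun y ↦ (v y).re) hv.re fun s ↦ by
      have key := congrArg re (hv_zero s)
      rw [← RCLike.re_eq_complex_re, ← integral_re (integrable_correlation s)] at key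
      simpa using key
    have im_zero := hinj (fun y ↦ (v y).im) hv.im fun s ↦ by
      have key := congrArg im (hv_zero s)
      rw [← RCLike.im_eq_complex_im, ← integral_im (integrable_correlation s)] at key
      simpa [integral_neg] using key
    filter_upwards [re_zero, im_zero] with y hre him
    exact Complex.ext hre him

theorem iff_volume_integral_cexp_zeros {ι : Type*} [Fintype ι] {u : (ι → ℝ) → ℝ}
    (hu : Integrable u) (hu₂ : MemLp u 2) :
    CorrelationInjective ℝ u ↔
      volume {ξ : ι → ℝ | ∫ y, (u y : ℂ) * cexp (I * (ξ ⬝ᵥ y : ℝ)) = 0} = 0 := by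
  have he := EuclideanSpace.volume_preserving_symm_measurableEquiv_toLp ι
  have scaled_zeros : {ξ : ι → ℝ | ∫ y, (u y : ℂ) * cexp (I * (ξ ⬝ᵥ y : ℝ)) = 0} =
      (-(2 * Real.pi)⁻¹ • ·) ⁻¹' ((MeasurableEquiv.toLp 2 (ι → ℝ)).symm.symm ⁻¹'
        {ξ | 𝓕 (fun y : EuclideanSpace ℝ ι ↦ (u y.ofLp : ℂ)) ξ = 0}) := by
    ext ξ
    exact (congrArg (· = 0) (fourier_comp_ofLp (fun y ↦ (u y : ℂ)) ξ)).symm.to_iff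
  have scale_ne_zero : -(2 * Real.pi)⁻¹ ≠ 0 := by simp [Real.pi_ne_zero]
  have fourier_criterion : CorrelationInjective ℂ (fun y : EuclideanSpace ℝ ι ↦ (u y.ofLp : ℂ)) ↔
      volume {ξ | 𝓕 (fun y : EuclideanSpace ℝ ι ↦ (u y.ofLp : ℂ)) ξ = 0} = 0 :=
    iff_volume_fourier_zeros (he.integrable_comp_of_integrable hu).ofReal
      (hu₂.comp_measurePreserving he).ofReal
  rw [scaled_zeros, Measure.addHaar_preimage_smul _ scale_ne_zero, he.symm.measure_preimage_equiv,
    mul_eq_zero, or_iff_right (by simp), ← fourier_criterion, ← ofReal_iff hu₂]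
  exact (comp_measurableEquiv_iff _ he fun _ _ ↦ rfl).symm

end CorrelationInjective

section LogCoordinates

theorem integral_Ioi_zero_eq_integral_exp {F : Type*} [NormedAddCommGroup F] [NormedSpace ℝ F]
    (g : ℝ → F) : ∫ t in Ioi 0, g t = ∫ t, Real.exp t • g (Real.exp t) := by
  rw [← Real.range_exp, ← image_univ, integral_image_eq_integral_abs_deriv_smul .univ
    (fun t _ ↦ (Real.hasDerivAt_exp t).hasDerivWithinAt) Real.exp_injective.injOn]
  simp

theorem integrableOn_Ioi_zero_mul_rpow_iff (g : ℝ → ℝ) (a : ℝ) :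
    IntegrableOn (fun t ↦ g t * t ^ (a - 1)) (Ioi 0) ↔
      Integrable fun t ↦ g (Real.exp t) * Real.exp (a * t) := by
  rw [← Real.range_exp, ← image_univ, integrableOn_image_iff_integrableOn_abs_deriv_smul .univ
    (fun t _ ↦ (Real.hasDerivAt_exp t).hasDerivWithinAt) Real.exp_injective.injOn,
    integrableOn_univ]
  refine integrable_congr (.of_forall fun t ↦ ?_)
  simp only [Real.abs_exp, smul_eq_mul, ← Real.exp_mul, mul_left_comm (Real.exp t),
    ← Real.exp_add]
  ring_nf

theorem integrable_exp_neg_mul_exp_mul_exp {k a : ℝ} (hk : 0 < k) (ha : 0 < a) :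
    Integrable fun t ↦ Real.exp (-(k * Real.exp t)) * Real.exp (a * t) := by
  rw [← integrableOn_Ioi_zero_mul_rpow_iff (fun t ↦ Real.exp (-(k * t)))]
  simpa [mul_comm] using integrableOn_rpow_mul_exp_neg_mul_rpow (s := a - 1) (by linarith)
    one_pos hk

theorem exp_ofReal_cpow (y : ℝ) (z : ℂ) : cexp y ^ z = cexp (z * y) := by
  rw [cpow_def_of_ne_zero (exp_ne_zero y), ← ofReal_exp, ← ofReal_log (Real.exp_pos y).le,
    Real.log_exp, mul_comm]

theorem mellin_eq_integral_exp (g : ℝ → ℂ) (s : ℂ) :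
    mellin g s = ∫ t : ℝ, g (Real.exp t) * cexp (s * t) := by
  rw [mellin, integral_Ioi_zero_eq_integral_exp]
  refine integral_congr_ae (.of_forall fun t ↦ ?_)
  simp only [real_smul, smul_eq_mul, ofReal_exp, exp_ofReal_cpow, ← mul_assoc, ← Complex.exp_add]
  ring_nf

variable {n : ℕ}

/-- The coordinatewise exponential, a parametrization of the positive orthant by `ℝⁿ`. -/
def orthantExp (y : Fin n → ℝ) : Fin n → ℝ := fun i ↦ Real.exp (y i)

/-- The coordinatewise logarithm, inverse to `orthantExp` on the positive orthant. -/
def orthantLog (x : Fin n → ℝ) : Fin n → ℝ := fun i ↦ Real.log (x i)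

theorem orthantExp_mem_posOrth (y : Fin n → ℝ) : orthantExp y ∈ posOrth n :=
  fun i ↦ Real.exp_pos (y i)

theorem orthantLog_orthantExp (y : Fin n → ℝ) : orthantLog (orthantExp y) = y :=
  funext fun i ↦ Real.log_exp (y i)

theorem orthantExp_orthantLog {x : Fin n → ℝ} (hx : x ∈ posOrth n) :
    orthantExp (orthantLog x) = x :=
  funext fun i ↦ Real.exp_log (hx i)

theorem orthantExp_add (x y : Fin n → ℝ) : orthantExp (x + y) = orthantExp x * orthantExp y :=
  funext fun i ↦ Real.exp_add (x i) (y i)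

theorem orthantExp_injective : Function.Injective (orthantExp (n := n)) :=
  Function.LeftInverse.injective orthantLog_orthantExp

theorem range_orthantExp : range (orthantExp (n := n)) = posOrth n :=
  (range_subset_iff.2 orthantExp_mem_posOrth).antisymm
    fun x hx ↦ ⟨orthantLog x, orthantExp_orthantLog hx⟩

theorem continuous_orthantExp : Continuous (orthantExp (n := n)) := by
  unfold orthantExp
  fun_prop

theorem measurableEmbedding_orthantExp : MeasurableEmbedding (orthantExp (n := n)) :=
  continuous_orthantExp.measurableEmbedding orthantExp_injective

theorem hasFDerivAt_orthantExp (y : Fin n → ℝ) :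
    HasFDerivAt orthantExp (ContinuousLinearMap.pi fun i ↦
      (Real.exp (y i) • ContinuousLinearMap.id ℝ ℝ).comp (ContinuousLinearMap.proj i)) y :=
  hasFDerivAt_pi.2 fun i ↦ (hasFDerivAt_apply (𝕜 := ℝ) i y).exp

theorem map_orthantExp_withDensity :
    (volume.withDensity fun y : Fin n → ℝ ↦ ENNReal.ofReal (Real.exp (∑ i, y i))).map orthantExp =
      volume.restrict (posOrth n) := by
  have density (y : Fin n → ℝ) : |(ContinuousLinearMap.pi fun i ↦ (Real.exp (y i) •
      ContinuousLinearMap.id ℝ ℝ).comp (ContinuousLinearMap.proj i)).det| =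
        Real.exp (∑ i, y i) := by
    simp [ContinuousLinearMap.det_pi, ← Real.exp_sum, -ContinuousLinearMap.smul_comp]
  have change_of_variables := map_withDensity_abs_det_fderiv_eq_addHaar volume
    (MeasurableSet.univ (α := Fin n → ℝ)).nullMeasurableSet
    (fun y _ ↦ (hasFDerivAt_orthantExp y).hasFDerivWithinAt) orthantExp_injective.injOn
  simpa only [density, image_univ, range_orthantExp, Measure.restrict_univ]
    using change_of_variables

theorem measurable_exp_sum :
    Measurable fun y : Fin n → ℝ ↦ ENNReal.ofReal (Real.exp (∑ i, y i)) := by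
  fun_prop

theorem integral_posOrth_eq_integral_orthantExp {F : Type*} [NormedAddCommGroup F]
    [NormedSpace ℝ F] (g : (Fin n → ℝ) → F) :
    ∫ x in posOrth n, g x = ∫ y, Real.exp (∑ i, y i) • g (orthantExp y) := by
  rw [← map_orthantExp_withDensity, measurableEmbedding_orthantExp.integral_map,
    integral_withDensity_eq_integral_toReal_smul measurable_exp_sum (by simp)]
  simp [Real.exp_nonneg]

theorem integrableOn_posOrth_iff {F : Type*} [NormedAddCommGroup F] [NormedSpace ℝ F]
    {g : (Fin n → ℝ) → F} : IntegrableOn g (posOrth n) ↔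
      Integrable fun y ↦ Real.exp (∑ i, y i) • g (orthantExp y) := by
  rw [IntegrableOn, ← map_orthantExp_withDensity, measurableEmbedding_orthantExp.integrable_map_iff,
    integrable_withDensity_iff_integrable_smul' measurable_exp_sum (by simp)]
  simp [Real.exp_nonneg]

theorem ae_restrict_posOrth_iff {p : (Fin n → ℝ) → Prop} :
    (∀ᵐ x ∂volume.restrict (posOrth n), p x) ↔ ∀ᵐ y, p (orthantExp y) := by
  rw [← map_orthantExp_withDensity, measurableEmbedding_orthantExp.ae_map_iff,
    ae_withDensity_iff measurable_exp_sum]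
  simp [Real.exp_pos]

theorem aestronglyMeasurable_restrict_posOrth_iff {F : Type*} [TopologicalSpace F]
    {g : (Fin n → ℝ) → F} : AEStronglyMeasurable g (volume.restrict (posOrth n)) ↔
      AEStronglyMeasurable fun y ↦ g (orthantExp y) := by
  rw [← map_orthantExp_withDensity, measurableEmbedding_orthantExp.aestronglyMeasurable_map_iff]
  refine ⟨fun hg ↦ hg.mono_ac ?_, fun hg ↦ hg.mono_ac (withDensity_absolutelyContinuous _ _)⟩
  exact withDensity_absolutelyContinuous' measurable_exp_sum.aemeasurable
    (.of_forall fun y ↦ (ENNReal.ofReal_pos.2 (Real.exp_pos _)).ne')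

theorem memL2w_iff_memLp {c : Fin n → ℝ} {f : (Fin n → ℝ) → ℝ} :
    MemL2w n c f ↔ MemLp (fun y ↦ f (orthantExp y) * Real.exp (c ⬝ᵥ y)) 2 := by
  have square (y : Fin n → ℝ) : Real.exp (∑ i, y i) •
      (|f (orthantExp y)| ^ 2 * ∏ i, orthantExp y i ^ (2 * c i - 1)) =
        (f (orthantExp y) * Real.exp (c ⬝ᵥ y)) ^ 2 := by
    simp only [orthantExp, ← Real.exp_mul, ← Real.exp_sum, sq_abs, smul_eq_mul, mul_pow,
      mul_left_comm (Real.exp _), ← Real.exp_add, ← Real.exp_nat_mul, dotProduct, Finset.mul_sum,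
      ← Finset.sum_add_distrib]
    congr! 3
    push_cast
    ring
  have measurable_iff : AEStronglyMeasurable f (volume.restrict (posOrth n)) ↔
      AEStronglyMeasurable fun y ↦ f (orthantExp y) * Real.exp (c ⬝ᵥ y) := by
    rw [aestronglyMeasurable_restrict_posOrth_iff]
    have weight_continuous : Continuous fun y : Fin n → ℝ ↦ Real.exp (c ⬝ᵥ y) := by fun_prop
    refine ⟨fun hf ↦ hf.mul weight_continuous.aestronglyMeasurable, fun hf ↦ ?_⟩
    refine (hf.mul (weight_continuous.inv₀ fun _ ↦ Real.exp_ne_zero _).aestronglyMeasurable).congr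
      (.of_forall fun y ↦ ?_)
    exact mul_inv_cancel_right₀ (Real.exp_ne_zero _) _
  rw [MemL2w, measurable_iff, integrableOn_posOrth_iff]
  simp only [square]
  exact ⟨fun hf ↦ (memLp_two_iff_integrable_sq hf.1).2 hf.2, fun hf ↦ ⟨hf.1, hf.integrable_sq⟩⟩

theorem mellinT_eq_integral_orthantExp (g : (Fin n → ℝ) → ℝ) (z : Fin n → ℂ) :
    mellinT n g z = ∫ y, (g (orthantExp y) : ℂ) * cexp (z ⬝ᵥ (ofReal ∘ y)) := by
  rw [mellinT, integral_posOrth_eq_integral_orthantExp]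
  refine integral_congr_ae (.of_forall fun y ↦ ?_)
  have exponent : ∑ i, (y i : ℂ) + ∑ i, (z i - 1) * y i = z ⬝ᵥ (ofReal ∘ y) := by
    simp only [dotProduct, Function.comp_apply, ← Finset.sum_add_distrib]
    congr! 1
    ring
  simp only [orthantExp, real_smul, ofReal_exp, ofReal_sum, exp_ofReal_cpow, ← Complex.exp_sum,
    ← mul_assoc, ← Complex.exp_add, exponent]
  exact mul_comm _ _

end LogCoordinates

section CostFunctions

variable {n : ℕ} {q : (Fin n → ℝ) → ℝ} {c : Fin n → ℝ}

/-- The cost-function conditions with `C¹` regularity weakened to Borel measurability on the open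
orthant. By homogeneity it is enough to ask that the level set at height `1` is bounded. -/
structure IsMeasurableCostFun (q : (Fin n → ℝ) → ℝ) : Prop where
  measurable : Measurable fun x : posOrth n ↦ q x
  pos : ∀ x ∈ posOrth n, 0 < q x
  homogeneous : ∀ t : ℝ, 0 < t → ∀ x ∈ posOrth n, q (t • x) = t * q x
  bounded : Bornology.IsBounded {x | x ∈ posOrth n ∧ q x = 1}

theorem IsCostFun.isMeasurableCostFun (hq : IsCostFun n q) : IsMeasurableCostFun q where
  measurable := hq.1.continuousOn.domRestrict.measurable
  pos := hq.2.1
  homogeneous := hq.2.2.1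
  bounded := hq.2.2.2 1

/-- The function `log q` in logarithmic coordinates. Homogeneity of `q` becomes equivariance under
translation along the diagonal. -/
def logCost (q : (Fin n → ℝ) → ℝ) (y : Fin n → ℝ) : ℝ := Real.log (q (orthantExp y))

theorem exp_dotProduct_add {ι : Type*} [Fintype ι] (c x y : ι → ℝ) :
    Real.exp (c ⬝ᵥ (x + y)) = Real.exp (c ⬝ᵥ x) * Real.exp (c ⬝ᵥ y) := by
  rw [dotProduct_add, Real.exp_add]

theorem exp_dotProduct_smul_one {ι : Type*} [Fintype ι] (c : ι → ℝ) (t : ℝ) :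
    Real.exp (c ⬝ᵥ (t • 1)) = Real.exp ((∑ i, c i) * t) := by
  rw [dotProduct_smul, dotProduct_one, smul_eq_mul, mul_comm]

namespace IsMeasurableCostFun

theorem nonempty_fin (hq : IsMeasurableCostFun q) : Nonempty (Fin n) := by
  by_contra hempty
  rw [not_nonempty_iff] at hempty
  have zero_mem : (0 : Fin n → ℝ) ∈ posOrth n := fun i ↦ isEmptyElim i
  have doubled := hq.homogeneous 2 two_pos 0 zero_mem
  rw [smul_zero] at doubled
  linarith [hq.pos 0 zero_mem]

theorem measurable_logCost (hq : IsMeasurableCostFun q) : Measurable (logCost q) :=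
  (hq.measurable.comp
    (continuous_orthantExp.measurable.subtype_mk (h := orthantExp_mem_posOrth))).log

theorem exp_logCost (hq : IsMeasurableCostFun q) (y : Fin n → ℝ) :
    Real.exp (logCost q y) = q (orthantExp y) :=
  Real.exp_log (hq.pos _ (orthantExp_mem_posOrth y))

theorem logCost_add_smul_one (hq : IsMeasurableCostFun q) (y : Fin n → ℝ) (t : ℝ) :
    logCost q (y + t • 1) = logCost q y + t := by
  have scaled : orthantExp (y + t • 1) = Real.exp t • orthantExp y := by
    ext i
    simp [orthantExp, Real.exp_add, mul_comm]
  rw [logCost, scaled, hq.homogeneous _ (Real.exp_pos t) _ (orthantExp_mem_posOrth y),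
    Real.log_mul (Real.exp_ne_zero t) (hq.pos _ (orthantExp_mem_posOrth y)).ne', Real.log_exp,
    add_comm, logCost]

theorem exists_pos_apply_le_mul (hq : IsMeasurableCostFun q) :
    ∃ B > 0, ∀ x ∈ posOrth n, ∀ i, x i ≤ B * q x := by
  obtain ⟨B, hB_pos, hB⟩ := hq.bounded.exists_pos_norm_le
  refine ⟨B, hB_pos, fun x hx i ↦ ?_⟩
  have q_pos := hq.pos x hx
  have normalized_mem : (q x)⁻¹ • x ∈ posOrth n := fun j ↦ mul_pos (inv_pos.2 q_pos) (hx j)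
  have normalized_le := hB ((q x)⁻¹ • x)
    ⟨normalized_mem, by rw [hq.homogeneous _ (inv_pos.2 q_pos) x hx, inv_mul_cancel₀ q_pos.ne']⟩
  have coordinate_le := (le_abs_self _).trans ((norm_le_pi_norm _ i).trans normalized_le)
  rwa [Pi.smul_apply, smul_eq_mul, inv_mul_le_iff₀ q_pos, mul_comm] at coordinate_le

theorem exists_pos_mul_sum_le (hq : IsMeasurableCostFun q) :
    ∃ k > 0, ∀ x ∈ posOrth n, k * ∑ i, x i ≤ q x := by
  obtain ⟨B, hB_pos, hB⟩ := hq.exists_pos_apply_le_mul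
  have card_pos : (0 : ℝ) < n := Nat.cast_pos.2 (Fin.pos_iff_nonempty.2 hq.nonempty_fin)
  refine ⟨(n * B)⁻¹, by positivity, fun x hx ↦ ?_⟩
  rw [inv_mul_le_iff₀ (by positivity)]
  calc ∑ i, x i ≤ ∑ _i : Fin n, B * q x := Finset.sum_le_sum fun i _ ↦ hB x hx i
    _ = n * B * q x := by simp [mul_assoc]

theorem integrable_exp_neg_exp_logCost (hq : IsMeasurableCostFun q) (hc : ∀ i, 0 < c i) :
    Integrable fun y ↦ Real.exp (-Real.exp (logCost q y)) * Real.exp (c ⬝ᵥ y) := by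
  obtain ⟨k, hk, hkq⟩ := hq.exists_pos_mul_sum_le
  have majorant : Integrable fun y : Fin n → ℝ ↦
      ∏ i, (Real.exp (-(k * Real.exp (y i))) * Real.exp (c i * y i)) :=
    Integrable.fintype_prod fun i ↦ integrable_exp_neg_mul_exp_mul_exp hk (hc i)
  have measurable_logCost := hq.measurable_logCost
  refine majorant.mono' (by fun_prop) (.of_forall fun y ↦ ?_)
  rw [Real.norm_of_nonneg (by positivity), Finset.prod_mul_distrib, ← Real.exp_sum,
    ← Real.exp_sum, Finset.sum_neg_distrib, ← Finset.mul_sum, hq.exp_logCost, dotProduct]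
  gcongr
  exact hkq _ (orthantExp_mem_posOrth y)

theorem integrable_comp_logCost (hq : IsMeasurableCostFun q) (hc : ∀ i, 0 < c i) {G : ℝ → ℝ}
    (hG : Integrable fun t ↦ G t * Real.exp ((∑ i, c i) * t)) :
    Integrable fun y ↦ G (logCost q y) * Real.exp (c ⬝ᵥ y) :=
  integrable_comp_mul_of_integrable (w := fun y ↦ Real.exp (c ⬝ᵥ y))
    (G₂ := fun t ↦ Real.exp (-Real.exp t)) hq.measurable_logCost hq.logCost_add_smul_one
    (exp_dotProduct_add c) (by simpa only [exp_dotProduct_smul_one] using hG)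
    (hq.integrable_exp_neg_exp_logCost hc) fun _ ↦ by positivity

end IsMeasurableCostFun

end CostFunctions

section MellinFactorization

variable {n : ℕ} {q : (Fin n → ℝ) → ℝ}

theorem IsMeasurableCostFun.mellinT_comp_mul_mellin (hq : IsMeasurableCostFun q) (g h : ℝ → ℝ)
    (z : Fin n → ℂ) :
    mellinT n (fun x ↦ g (q x)) z * mellin (fun t ↦ (h t : ℂ)) (∑ i, z i) =
      mellinT n (fun x ↦ h (q x)) z * mellin (fun t ↦ (g t : ℂ)) (∑ i, z i) := by
  have weight_add (x y : Fin n → ℝ) : cexp (z ⬝ᵥ (ofReal ∘ (x + y))) =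
      cexp (z ⬝ᵥ (ofReal ∘ x)) * cexp (z ⬝ᵥ (ofReal ∘ y)) := by
    rw [← Complex.exp_add, ← dotProduct_add]
    congr 2
    exact funext fun i ↦ ofReal_add (x i) (y i)
  have weight_diagonal (t : ℝ) :
      z ⬝ᵥ (ofReal ∘ (t • 1 : Fin n → ℝ)) = (∑ i, z i) * t := by
    simp [dotProduct, Finset.sum_mul]
  have swap := integral_comp_mul_integral_eq_swap (w := fun y ↦ cexp (z ⬝ᵥ (ofReal ∘ y))) volume
    hq.measurable_logCost hq.logCost_add_smul_one weight_add
    (fun t ↦ (g (Real.exp t) : ℂ)) (fun t ↦ (h (Real.exp t) : ℂ))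
  simpa only [mellinT_eq_integral_orthantExp, mellin_eq_integral_exp, hq.exp_logCost,
    weight_diagonal] using swap

theorem IsMeasurableCostFun.mellinT_comp_eq_zero_iff (hq : IsMeasurableCostFun q) (h : ℝ → ℝ)
    {z : Fin n → ℂ} (hz : 0 < (∑ i, z i).re) :
    mellinT n (fun x ↦ h (q x)) z = 0 ↔
      mellinT n (fun x ↦ Real.exp (-q x)) z = 0 ∨ mellin (fun t ↦ (h t : ℂ)) (∑ i, z i) = 0 := by
  have factorization := hq.mellinT_comp_mul_mellin h (fun t ↦ Real.exp (-t)) z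
  rw [← GammaIntegral_eq_mellin, ← Gamma_eq_integral hz] at factorization
  rw [← mul_eq_zero, ← factorization, mul_eq_zero, or_iff_left (Gamma_ne_zero_of_re_pos hz)]

theorem continuous_mellin_vertical_line {h : ℝ → ℝ} {a : ℝ} (hh : MemL1w1 a h) :
    Continuous fun τ : ℝ ↦ mellin (fun t ↦ (h t : ℂ)) (a + I * τ) := by
  have integrable_neg : Integrable fun t : ℝ ↦ Real.exp (-a * t) • (h (Real.exp (-t)) : ℂ) := by
    refine (((integrableOn_Ioi_zero_mul_rpow_iff h a).1 hh).comp_neg.ofReal (𝕜 := ℂ)).congr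
      (.of_forall fun t ↦ ?_)
    simp [mul_comm]
  have := continuous_fourier integrable_neg
  simp only [mellin_eq_fourier, add_re, ofReal_re, add_im, ofReal_im, I_mul_re, I_mul_im, neg_zero,
    add_zero, zero_add]
  fun_prop

theorem volume_sum_mem_eq_zero_iff {ι : Type*} [Fintype ι] [Nonempty ι] {s : Set ℝ}
    (hs : MeasurableSet s) : volume {ξ : ι → ℝ | ∑ i, ξ i ∈ s} = 0 ↔ volume s = 0 := by
  have surjective : Function.Surjective (Fintype.linearCombination ℝ (1 : ι → ℝ)) := fun t ↦ by
    classical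
    exact ⟨Pi.single (Classical.arbitrary ι) t, by simp⟩
  have ae_iff_ae := ae_comp_linearMap_mem_iff _ (volume : Measure (ι → ℝ)) (volume : Measure ℝ)
    surjective hs.compl
  simpa [ae_iff, Fintype.linearCombination_apply] using ae_iff_ae

end MellinFactorization

section LogKernel

variable {n : ℕ} {q : (Fin n → ℝ) → ℝ} {h : ℝ → ℝ} {c : Fin n → ℝ}

/-- The kernel of `R^h_q` in logarithmic coordinates, weighted so that `L²_{I-c}` becomes the
unweighted `L²(ℝⁿ)` and `R^h_q` becomes cross-correlation with this function. -/
def logKernel (q : (Fin n → ℝ) → ℝ) (h : ℝ → ℝ) (c y : Fin n → ℝ) : ℝ :=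
  h (q (orthantExp y)) * Real.exp (c ⬝ᵥ y)

theorem integrable_logKernel (hq : IsMeasurableCostFun q) (hc : ∀ i, 0 < c i)
    (hh : MemL1w1 (∑ i, c i) h) : Integrable (logKernel q h c) := by
  have key := hq.integrable_comp_logCost hc ((integrableOn_Ioi_zero_mul_rpow_iff h _).1 hh)
  simp only [hq.exp_logCost] at key
  exact key

theorem memLp_two_logKernel (hq : IsMeasurableCostFun q) (hc : ∀ i, 0 < c i)
    (hh : MemL1w1 (∑ i, c i) h) (hh₂ : MemL2w1 (∑ i, c i) h) : MemLp (logKernel q h c) 2 := by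
  have integrable_sq : Integrable fun t ↦
      h (Real.exp t) ^ 2 * Real.exp ((∑ i, (2 • c) i) * t) := by
    have key := (integrableOn_Ioi_zero_mul_rpow_iff _ _).1 hh₂.2
    simpa [← Finset.mul_sum] using key
  refine (memLp_two_iff_integrable_sq (integrable_logKernel hq hc hh).1).2 ?_
  refine (hq.integrable_comp_logCost (c := 2 • c) (by simpa using hc) integrable_sq).congr
    (.of_forall fun y ↦ ?_)
  simp only [logKernel, hq.exp_logCost, mul_pow, ← Real.exp_nat_mul, smul_dotProduct]
  rw [nsmul_eq_mul]

theorem integral_logKernel_mul_cexp (q : (Fin n → ℝ) → ℝ) (h : ℝ → ℝ) (c ξ : Fin n → ℝ) :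
    ∫ y, (logKernel q h c y : ℂ) * cexp (I * (ξ ⬝ᵥ y : ℝ)) =
      mellinT n (fun x ↦ h (q x)) (fun i ↦ c i + I * ξ i) := by
  rw [mellinT_eq_integral_orthantExp]
  refine integral_congr_ae (.of_forall fun y ↦ ?_)
  have exponent : ((c ⬝ᵥ y : ℝ) : ℂ) + I * (ξ ⬝ᵥ y : ℝ) =
      (fun i ↦ (c i : ℂ) + I * ξ i) ⬝ᵥ (ofReal ∘ y) := by
    simp [dotProduct, Finset.mul_sum, add_mul, mul_assoc, Finset.sum_add_distrib]
  simp only [logKernel, ofReal_mul, ofReal_exp, mul_assoc, ← Complex.exp_add, exponent]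

theorem rhq_orthantExp (q : (Fin n → ℝ) → ℝ) (h : ℝ → ℝ) (f : (Fin n → ℝ) → ℝ)
    (c s : Fin n → ℝ) :
    Rhq n q h f (orthantExp s) = Real.exp (-(c ⬝ᵥ s)) *
      ∫ y, inner ℝ (f (orthantExp y) * Real.exp ((1 - c) ⬝ᵥ y)) (logKernel q h c (s + y)) := by
  rw [Rhq, integral_posOrth_eq_integral_orthantExp, ← integral_const_mul]
  refine integral_congr_ae (.of_forall fun y ↦ ?_)
  have weight : Real.exp (∑ i, y i) = Real.exp (-(c ⬝ᵥ s)) * Real.exp (c ⬝ᵥ (s + y)) *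
      Real.exp ((1 - c) ⬝ᵥ y) := by
    rw [← Real.exp_add, ← Real.exp_add, dotProduct_add, sub_dotProduct, one_dotProduct]
    ring_nf
  have product : (fun i ↦ orthantExp s i * orthantExp y i) = orthantExp (s + y) :=
    (orthantExp_add s y).symm
  simp only [product, weight, logKernel, smul_eq_mul, Real.inner_apply]
  ring

theorem rhq_orthantExp_eq_zero_iff (f : (Fin n → ℝ) → ℝ) (s : Fin n → ℝ) :
    Rhq n q h f (orthantExp s) = 0 ↔
      ∫ y, inner ℝ (f (orthantExp y) * Real.exp ((1 - c) ⬝ᵥ y)) (logKernel q h c (s + y)) = 0 := by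
  rw [rhq_orthantExp q h f c, mul_eq_zero, or_iff_right (Real.exp_ne_zero _)]

theorem rhq_injective_iff_correlationInjective (q : (Fin n → ℝ) → ℝ) (h : ℝ → ℝ)
    (c : Fin n → ℝ) :
    (∀ f, MemL2w n (1 - c) f → (∀ p ∈ posOrth n, Rhq n q h f p = 0) →
        ∀ᵐ x ∂volume.restrict (posOrth n), f x = 0) ↔
      CorrelationInjective ℝ (logKernel q h c) := by
  constructor
  · intro hinj v hv hv_zero
    let f : (Fin n → ℝ) → ℝ := fun x ↦ v (orthantLog x) * Real.exp (-((1 - c) ⬝ᵥ orthantLog x))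
    have f_weighted (y : Fin n → ℝ) : f (orthantExp y) * Real.exp ((1 - c) ⬝ᵥ y) = v y := by
      simp [f, orthantLog_orthantExp, mul_assoc, ← Real.exp_add]
    have f_zero := hinj f (memL2w_iff_memLp.2 (by simpa only [f_weighted] using hv)) fun p hp ↦ by
      rw [← orthantExp_orthantLog hp, rhq_orthantExp_eq_zero_iff (c := c)]
      simpa only [f_weighted] using hv_zero (orthantLog p)
    filter_upwards [ae_restrict_posOrth_iff.1 f_zero] with y hy
    rw [← f_weighted, hy, zero_mul, Pi.zero_apply]
  · intro hinj f hf hf_zero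
    have weighted_zero := hinj _ (memL2w_iff_memLp.1 hf) fun s ↦
      (rhq_orthantExp_eq_zero_iff f s).1 (hf_zero _ (orthantExp_mem_posOrth s))
    refine ae_restrict_posOrth_iff.2 ?_
    filter_upwards [weighted_zero] with y hy
    exact (mul_eq_zero.1 hy).resolve_right (Real.exp_ne_zero _)

end LogKernel

theorem rhq_injective_L2_iff_general {n : ℕ} {q : (Fin n → ℝ) → ℝ} (hq : IsMeasurableCostFun q)
    {c : Fin n → ℝ} (hc : ∀ i, 0 < c i) {h : ℝ → ℝ} (hh₁ : MemL1w1 (∑ i, c i) h)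
    (hh₂ : MemL2w1 (∑ i, c i) h) :
    (∀ f, MemL2w n (1 - c) f → (∀ p ∈ posOrth n, Rhq n q h f p = 0) →
        ∀ᵐ x ∂volume.restrict (posOrth n), f x = 0) ↔
      volume {ξ : Fin n → ℝ |
          mellinT n (fun x ↦ Real.exp (-q x)) (fun i ↦ c i + I * ξ i) = 0} = 0 ∧
        volume {τ : ℝ | mellin (fun t ↦ (h t : ℂ)) ((∑ i, c i : ℝ) + I * τ) = 0} = 0 := by
  have := hq.nonempty_fin
  have sum_line (ξ : Fin n → ℝ) :
      ∑ i, ((c i : ℂ) + I * ξ i) = (∑ i, c i : ℝ) + I * (∑ i, ξ i : ℝ) := by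
    simp [Finset.sum_add_distrib, Finset.mul_sum]
  have re_pos (ξ : Fin n → ℝ) : 0 < (∑ i, ((c i : ℂ) + I * ξ i)).re := by
    simpa [sum_line] using Finset.sum_pos (fun i _ ↦ hc i) Finset.univ_nonempty
  have zeros_measurable :
      MeasurableSet {τ : ℝ | mellin (fun t ↦ (h t : ℂ)) ((∑ i, c i : ℝ) + I * τ) = 0} :=
    (isClosed_eq (continuous_mellin_vertical_line hh₁) continuous_const).measurableSet
  rw [rhq_injective_iff_correlationInjective,
    CorrelationInjective.iff_volume_integral_cexp_zeros (integrable_logKernel hq hc hh₁)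
      (memLp_two_logKernel hq hc hh₁ hh₂),
    ← volume_sum_mem_eq_zero_iff (ι := Fin n) zeros_measurable, ← measure_union_null_iff]
  simp only [integral_logKernel_mul_cexp, hq.mellinT_comp_eq_zero_iff h (re_pos _), sum_line]
  rfl

/-- Theorem: for `h ∈ L¹_α ∩ L²_α`, `R^h_q` is injective on `L²_{I-c}(ℝ^n_+)` iff the
zero set of `(M e^{-q})` on the plane `Re z = c` has measure zero in `ℝ^n` and the zero
set of `Mh` on the line `Re s = α` has measure zero in `ℝ`. -/
theorem rhq_injective_L2_iff
    (n : ℕ) (hn : 2 ≤ n) (q : (Fin n → ℝ) → ℝ) (hq : IsCostFun n q)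
    (c : Fin n → ℝ) (hc : ∀ i, 0 < c i) (α : ℝ) (hα : α = ∑ i, c i)
    (h : ℝ → ℝ) (hh1 : MemL1w1 α h) (hh2 : MemL2w1 α h) :
    (∀ f : (Fin n → ℝ) → ℝ, MemL2w n (fun i => 1 - c i) f →
        (∀ p ∈ posOrth n, Rhq n q h f p = 0) →
        ∀ᵐ x ∂(volume.restrict (posOrth n)), f x = 0) ↔
      (volume {ξ : Fin n → ℝ |
          mellinT n (fun x => Real.exp (-q x)) (fun i => (c i : ℂ) + I * (ξ i : ℂ)) = 0} = 0 ∧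
        volume {τ : ℝ |
          mellin (fun t => (h t : ℂ)) ((α : ℂ) + I * (τ : ℂ)) = 0} = 0) := by
  subst hα
  exact rhq_injective_L2_iff_general hq.isMeasurableCostFun hc hh1 hh2
end
end

section
/- Let n ≥ 1, c ∈ ℝ^n, and k ∈ L^1_c(ℝ^n_+). Then the linear span of the multiplicative shifts { k_p : p ∈ ℝ^n_+ }, where k_p(x) = k(p_1x_1,…,p_nx_n), is dense in L^1_c(ℝ^n_+) if and only if (Mk)(c + iξ) ≠ 0 for every ξ ∈ ℝ^n. -/
open MeasureTheory Complex Set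

noncomputable section

/-- Membership in `L¹_c(ℝ^n_+)`: measurable with `∫ |f| x^{c-I} < ∞`. -/
def MemL1w (n : ℕ) (c : Fin n → ℝ) (f : (Fin n → ℝ) → ℝ) : Prop :=
  IntegrableOn (fun x => f x * ∏ i, x i ^ (c i - 1)) (posOrth n)

/-!
In the coordinates `t = log x` the weighted space `L¹_c(ℝⁿ_+)` becomes `L¹(ℝⁿ)`, multiplicative
shifts become translations up to a constant factor, and `ξ ↦ (Mk)(c + iξ)` becomes the Fourier
transform of the lifted kernel `K`; the claim is then Wiener's `L¹` Tauberian theorem.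

If `𝓕 K` vanishes at `ξ`, then `F ↦ 𝓕 F ξ` annihilates every translate of `K`, hence the closure of
their span, but not the Gaussian. If `𝓕 K` has no zero, fix `ξ₀` and let `w` be a band-limited
kernel with `𝓕 w = 1` near `ξ₀`. As the band shrinks, a fixed translation acts on `w` more and more
like multiplication by the character of frequency `ξ₀`, so `‖K * w - 𝓕 K ξ₀ • w‖₁ → 0`. A Neumann
series therefore divides by `K` every function whose Fourier transform is supported near `ξ₀`, and a
partition of unity in frequency does so for every smooth compactly supported Fourier transform.
Convolutions with `K` lie in the closed span of its translates, and a band-limited approximate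
identity shows that they are dense.
-/

namespace WienerTauberian

open Filter Topology
open scoped FourierTransform SchwartzMap ContDiff RealInnerProductSpace

/-! ### Smooth cutoffs -/

section Cutoff

variable {V : Type*} [NormedAddCommGroup V] [InnerProductSpace ℝ V] [FiniteDimensional ℝ V]

/-- The bump of radius `r` at `ξ₀` as a Schwartz function: it is `1` on the ball of radius `r`
and vanishes outside the ball of radius `2 * r`. -/
def cutoff (ξ₀ : V) {r : ℝ} (hr : 0 < r) : 𝓢(V, ℂ) :=
  let bump : ContDiffBump ξ₀ := ⟨r, 2 * r, hr, by linarith⟩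
  (bump.hasCompactSupport.comp_left (g := ofReal) ofReal_zero).toSchwartzMap
    (ofRealCLM.contDiff.comp bump.contDiff)

lemma hasCompactSupport_cutoff (ξ₀ : V) {r : ℝ} (hr : 0 < r) :
    HasCompactSupport (cutoff ξ₀ hr) :=
  HasCompactSupport.comp_left (g := ofReal) (ContDiffBump.hasCompactSupport _) ofReal_zero

lemma cutoff_eq_one {ξ₀ ξ : V} {r : ℝ} (hr : 0 < r) (hξ : ξ ∈ Metric.ball ξ₀ r) :
    cutoff ξ₀ hr ξ = 1 :=
  ofReal_eq_one.2 (ContDiffBump.one_of_mem_closedBall _ (Metric.ball_subset_closedBall hξ))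

lemma cutoff_eq_cutoff_zero_one (ξ₀ ξ : V) {r : ℝ} (hr : 0 < r) :
    cutoff ξ₀ hr ξ = cutoff 0 one_pos (r⁻¹ • (ξ - ξ₀)) := by
  refine ofReal_inj.2 ?_
  simp only [ContDiffBump.apply, mul_div_cancel_right₀ 2 hr.ne', div_one, mul_one, inv_one,
    one_smul, sub_zero]

open scoped Manifold in
lemma exists_eq_sum_support_subset {ψ : 𝓢(V, ℂ)} (hψ : HasCompactSupport ψ) {U : V → Set V}
    (hU : ∀ x, IsOpen (U x)) (hxU : ∀ x, x ∈ U x) :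
    ∃ (t : Finset V) (θ : t → 𝓢(V, ℂ)),
      ψ = ∑ i, θ i ∧ ∀ i : t, Function.support (θ i) ⊆ U i := by
  obtain ⟨t, ht⟩ := hψ.isCompact.elim_finite_subcover U hU
    fun x _ => mem_iUnion.2 ⟨x, hxU x⟩
  rw [← iUnion_subtype (p := (· ∈ t)) (s := fun x => U x)] at ht
  obtain ⟨ρ, hρ⟩ := SmoothPartitionOfUnity.exists_isSubordinate 𝓘(ℝ, V) (isClosed_tsupport ψ)
    (fun i : t => U i) (fun i => hU i) ht
  have hsmooth : ∀ i, ContDiff ℝ ∞ fun x => (ρ i x : ℂ) * ψ x := fun i =>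
    (ofRealCLM.contDiff.comp (ρ i).contMDiff.contDiff).mul ψ.smooth'
  refine ⟨t, fun i => hψ.mul_left.toSchwartzMap (hsmooth i), ?_, fun i x hx => ?_⟩
  · ext x
    rw [sum_apply]
    change ψ x = ∑ i, (ρ i x : ℂ) * ψ x
    rw [← Finset.sum_mul, ← ofReal_sum]
    by_cases hx : x ∈ tsupport ψ
    · rw [← finsum_eq_sum_of_fintype, ρ.sum_eq_one hx, ofReal_one, one_mul]
    · rw [image_eq_zero_of_notMem_tsupport hx, mul_zero]
  · exact hρ i (subset_tsupport _ fun h0 => hx (by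
      change (ρ i x : ℂ) * ψ x = 0
      rw [h0, ofReal_zero, zero_mul]))

end Cutoff

variable {V : Type*} [NormedAddCommGroup V] [InnerProductSpace ℝ V] [FiniteDimensional ℝ V]
  [MeasurableSpace V] [BorelSpace V]

/-! ### The Fourier transform on `L¹` -/

/-- The bounded functional `f ↦ 𝓕 f ξ` on `L¹(V)`. -/
def fourierAt (ξ : V) : (V →₁[volume] ℂ) →L[ℂ] ℂ :=
  BoundedContinuousFunction.evalCLM ℂ ξ ∘L Real.Lp.fourierTransformCLM V ℂ

lemma fourierAt_apply (ξ : V) (f : V →₁[volume] ℂ) : fourierAt ξ f = 𝓕 (f : V → ℂ) ξ := rfl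

lemma fourierAt_eq_of_ae_eq {f : V →₁[volume] ℂ} {g : V → ℂ} (h : f =ᵐ[volume] g) (ξ : V) :
    fourierAt ξ f = 𝓕 g ξ := by
  rw [fourierAt_apply, Real.fourier_congr_ae h]

lemma fourier_comp_sub_right (k : V → ℂ) (y ξ : V) :
    𝓕 (fun x => k (x - y)) ξ = 𝐞 (-⟪y, ξ⟫) • 𝓕 k ξ := by
  have hshift := congrFun
    (VectorFourier.fourierIntegral_comp_add_right 𝐞 volume (innerₗ V) k (-y)) ξ
  simp only [Function.comp_def, ← sub_eq_add_neg, innerₗ_apply_apply, inner_neg_left] at hshift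
  exact hshift

lemma norm_fourierAt_le (ξ : V) (f : V →₁[volume] ℂ) : ‖fourierAt ξ f‖ ≤ ‖f‖ := by
  rw [L1.norm_eq_integral_norm]
  exact VectorFourier.norm_fourierIntegral_le_integral_norm _ _ _ _ _

lemma integral_fourier_mul_eq {φ ψ : V → ℂ} (hφ : Integrable φ) (hψ : Integrable ψ) :
    ∫ ξ, 𝓕 φ ξ * ψ ξ = ∫ x, φ x * 𝓕 ψ x := by
  have hflip := VectorFourier.integral_fourierIntegral_smul_eq_flip (L := innerₗ V)
    Real.continuous_fourierChar continuous_inner hφ hψ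
  rwa [flip_innerₗ] at hflip

lemma eq_zero_of_fourierAt_eq_zero {f : V →₁[volume] ℂ} (hf : ∀ ξ, fourierAt ξ f = 0) :
    f = 0 := by
  refine LinearMap.ker_eq_bot'.1
    (Lp.ker_toTemperedDistributionCLM_eq_bot (F := ℂ) (μ := (volume : Measure V)) (p := 1)) f ?_
  ext ψ
  calc Lp.toTemperedDistribution f ψ = ∫ x, 𝓕 (𝓕⁻ ψ) x * f x := by
        rw [Lp.toTemperedDistribution_apply, FourierTransform.fourier_fourierInv_eq]; rfl
    _ = ∫ ξ, 𝓕⁻ ψ ξ * 𝓕 (f : V → ℂ) ξ := by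
        rw [SchwartzMap.fourier_coe]
        exact integral_fourier_mul_eq (SchwartzMap.integrable _) (L1.integrable_coeFn f)
    _ = 0 := by simp only [← fourierAt_apply, hf, mul_zero, integral_zero]

lemma ext_fourierAt {f g : V →₁[volume] ℂ} (h : ∀ ξ, fourierAt ξ f = fourierAt ξ g) : f = g :=
  sub_eq_zero.1 (eq_zero_of_fourierAt_eq_zero fun ξ => by rw [map_sub, h ξ, sub_self])

/-! ### Translation and convolution -/

/-- The translation `f ↦ f (· - y)` on `L¹(V)`. -/
def translate (y : V) : (V →₁[volume] ℂ) →ₗᵢ[ℂ] (V →₁[volume] ℂ) :=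
  Lp.compMeasurePreservingₗᵢ ℂ (· - y) (measurePreserving_sub_right volume y)

lemma coeFn_translate (y : V) (f : V →₁[volume] ℂ) :
    translate y f =ᵐ[volume] fun x => f (x - y) :=
  Lp.coeFn_compMeasurePreserving f (measurePreserving_sub_right volume y)

lemma translate_ae_eq {f : V →₁[volume] ℂ} {g : V → ℂ} (h : f =ᵐ[volume] g) (y : V) :
    translate y f =ᵐ[volume] fun x => g (x - y) :=
  (coeFn_translate y f).trans
    ((measurePreserving_sub_right volume y).quasiMeasurePreserving.ae_eq_comp h)

lemma translate_zero (f : V →₁[volume] ℂ) : translate 0 f = f :=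
  Lp.ext (by simpa using coeFn_translate 0 f)

lemma continuous_translate (f : V →₁[volume] ℂ) : Continuous fun y => translate y f := by
  let subRight : C(V, C(V, V)) := (⟨fun p : V × V => p.2 - p.1, by fun_prop⟩ : C(V × V, V)).curry
  exact Continuous.compMeasurePreservingLp (f := fun _ => f) (g := subRight) continuous_const
    subRight.continuous (measurePreserving_sub_right volume) ENNReal.one_ne_top

lemma fourierAt_translate (ξ y : V) (f : V →₁[volume] ℂ) :
    fourierAt ξ (translate y f) = 𝐞 (-⟪y, ξ⟫) • fourierAt ξ f := by
  rw [fourierAt_eq_of_ae_eq (coeFn_translate y f), fourier_comp_sub_right, fourierAt_apply]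

lemma integrable_smul_translate {φ : V → ℂ} (hφ : Integrable φ) {γ : V → V}
    (hγ : Continuous γ) (f : V →₁[volume] ℂ) : Integrable fun y => φ y • translate (γ y) f :=
  .mono' (hφ.norm.mul_const ‖f‖)
    (hφ.aestronglyMeasurable.smul ((continuous_translate f).comp hγ).aestronglyMeasurable)
    (.of_forall fun y => by rw [norm_smul, LinearIsometry.norm_map])

/-- The convolution `h * f = ∫ h(y) f(· - y) dy`, as a Bochner integral in `L¹(V)`. -/
def conv (h f : V →₁[volume] ℂ) : V →₁[volume] ℂ := ∫ y, h y • translate y f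

lemma integrable_conv_integrand (h f : V →₁[volume] ℂ) : Integrable fun y => h y • translate y f :=
  integrable_smul_translate (L1.integrable_coeFn h) continuous_id f

lemma norm_conv_le (h f : V →₁[volume] ℂ) : ‖conv h f‖ ≤ ‖h‖ * ‖f‖ :=
  calc ‖conv h f‖ ≤ ∫ y, ‖h y • translate y f‖ := norm_integral_le_integral_norm _
    _ = ‖h‖ * ‖f‖ := by
      simp_rw [norm_smul, LinearIsometry.norm_map, integral_mul_const,
        ← L1.norm_eq_integral_norm]

lemma fourierAt_conv (ξ : V) (h f : V →₁[volume] ℂ) :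
    fourierAt ξ (conv h f) = fourierAt ξ h * fourierAt ξ f := by
  rw [conv, ← ContinuousLinearMap.integral_comp_comm _ (integrable_conv_integrand h f),
    fourierAt_apply ξ h, Real.fourier_eq, ← integral_mul_const]
  refine integral_congr_ae (ae_of_all _ fun y => ?_)
  simp only [map_smul, fourierAt_translate, Circle.smul_def, smul_eq_mul]
  ring

lemma conv_comm (h f : V →₁[volume] ℂ) : conv h f = conv f h :=
  ext_fourierAt fun ξ => by simp only [fourierAt_conv, mul_comm]

lemma conv_assoc (h g f : V →₁[volume] ℂ) : conv (conv h g) f = conv h (conv g f) :=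
  ext_fourierAt fun ξ => by simp only [fourierAt_conv, mul_assoc]

/-- Convolution with `h` as a bounded operator on `L¹(V)`. -/
def convCLM (h : V →₁[volume] ℂ) : (V →₁[volume] ℂ) →L[ℂ] (V →₁[volume] ℂ) :=
  LinearMap.mkContinuous
    { toFun := conv h
      map_add' := fun f g => ext_fourierAt fun ξ => by simp only [fourierAt_conv, map_add, mul_add]
      map_smul' := fun a f => ext_fourierAt fun ξ => by
        simp only [fourierAt_conv, map_smul, smul_eq_mul, RingHom.id_apply, mul_left_comm] }
    ‖h‖ (norm_conv_le h)

lemma convCLM_apply (h f : V →₁[volume] ℂ) : convCLM h f = conv h f := rfl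

lemma norm_convCLM_le (h : V →₁[volume] ℂ) : ‖convCLM h‖ ≤ ‖h‖ :=
  LinearMap.mkContinuous_norm_le _ (norm_nonneg h) _

lemma conv_mem_of_translate_mem {J : Submodule ℂ (V →₁[volume] ℂ)}
    (hJ : IsClosed (J : Set (V →₁[volume] ℂ))) {f : V →₁[volume] ℂ}
    (hf : ∀ y, translate y f ∈ J) (h : V →₁[volume] ℂ) : conv h f ∈ J := by
  have := hJ
  have mkQL_eq_zero : ∀ g, J.mkQL g = 0 ↔ g ∈ J := fun _ => Submodule.Quotient.mk_eq_zero J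
  rw [← mkQL_eq_zero, conv,
    ← ContinuousLinearMap.integral_comp_comm _ (integrable_conv_integrand h f)]
  simp only [(mkQL_eq_zero _).2 (J.smul_mem _ (hf _)), integral_zero]

lemma tendsto_integral_norm_mul_norm_translate_sub {φ : V → ℂ} (hφ : Integrable φ)
    (f : V →₁[volume] ℂ) :
    Tendsto (fun r : ℝ => ∫ y, ‖φ y‖ * ‖translate (r • y) f - f‖) (𝓝 0) (𝓝 0) := by
  rw [← integral_zero V ℝ]
  refine tendsto_integral_filter_of_dominated_convergence (fun y => ‖φ y‖ * (‖f‖ + ‖f‖))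
    (.of_forall fun r => ?_) (.of_forall fun r => .of_forall fun y => ?_)
    (hφ.norm.mul_const _) (.of_forall fun y => ?_)
  · have := (continuous_translate f).comp (continuous_const_smul r)
    exact hφ.norm.aestronglyMeasurable.mul (this.sub continuous_const).norm.aestronglyMeasurable
  · rw [norm_mul, norm_norm, norm_norm]
    gcongr
    exact (norm_sub_le _ _).trans_eq (by rw [LinearIsometry.norm_map])
  · have : Continuous fun r : ℝ => ‖φ y‖ * ‖translate (r • y) f - f‖ := by
      have : Continuous fun r : ℝ => translate (r • y) f :=
        (continuous_translate f).comp (continuous_id.smul continuous_const)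
      exact continuous_const.mul (this.sub continuous_const).norm
    simpa [translate_zero] using this.tendsto 0
/-! ### Local division by a kernel -/

lemma exists_conv_eq_of_norm_sub_smul_conv_lt_one {K v f : V →₁[volume] ℂ} {a : ℂ}
    (hv : ‖v - a • conv K v‖ < 1) (hf : ∀ ξ, fourierAt ξ f = 0 ∨ fourierAt ξ v = 1) :
    ∃ u, conv K u = f := by
  set g := v - a • conv K v with hg
  let oneSubConv := Units.oneSub (convCLM g) ((norm_convCLM_le g).trans_lt hv)
  obtain ⟨w, hw⟩ : ∃ w, w - conv g w = f :=
    ⟨oneSubConv⁻¹.val f, DFunLike.congr_fun oneSubConv.mul_inv f⟩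
  refine ⟨a • w, ext_fourierAt fun ξ => ?_⟩
  have hw_hat : fourierAt ξ w * (1 - fourierAt ξ g) = fourierAt ξ f := by
    rw [← hw, map_sub (fourierAt ξ) w, fourierAt_conv]
    ring
  rw [fourierAt_conv, map_smul, smul_eq_mul]
  rcases hf ξ with hf0 | hv1
  · have hg1 : fourierAt ξ g ≠ 1 := fun h =>
      ((norm_fourierAt_le ξ g).trans_lt hv).ne (by rw [h, norm_one])
    rw [hf0, mul_eq_zero, or_iff_left (sub_ne_zero.2 hg1.symm)] at hw_hat
    rw [hf0, hw_hat, mul_zero, mul_zero]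
  · have hg_hat : fourierAt ξ g = 1 - a * fourierAt ξ K := by
      rw [hg, map_sub, map_smul, fourierAt_conv, hv1, mul_one, smul_eq_mul]
    rw [← hw_hat, hg_hat]
    ring

lemma norm_conv_sub_fourierAt_smul_le (K v : V →₁[volume] ℂ) (ξ : V) :
    ‖conv K v - fourierAt ξ K • v‖ ≤
      ∫ y, ‖K y‖ * ‖translate y v - (𝐞 (-⟪y, ξ⟫) : ℂ) • v‖ := by
  have hK : Integrable fun y => 𝐞 (-⟪y, ξ⟫) • K y :=
    (Real.fourierIntegral_convergent_iff ξ).2 (L1.integrable_coeFn K)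
  rw [conv, fourierAt_apply, Real.fourier_eq, ← integral_smul_const,
    ← integral_sub (integrable_conv_integrand K v) (hK.smul_const v)]
  refine (norm_integral_le_integral_norm _).trans_eq
    (integral_congr_ae (.of_forall fun y => ?_))
  simp only [← norm_smul, smul_sub, smul_smul, Circle.smul_def, smul_eq_mul, mul_comm]

/-! ### Band-limited kernels -/

/-- The inverse Fourier transform of a Schwartz function, as an element of `L¹(V)`. -/
def fourierInvL1 : 𝓢(V, ℂ) →L[ℂ] (V →₁[volume] ℂ) :=
  SchwartzMap.toLpCLM ℂ ℂ 1 volume ∘L FourierTransform.fourierInvCLM ℂ 𝓢(V, ℂ)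

lemma coeFn_fourierInvL1 (ψ : 𝓢(V, ℂ)) :
    fourierInvL1 ψ =ᵐ[volume] (𝓕⁻ ψ : 𝓢(V, ℂ)) :=
  SchwartzMap.coeFn_toLp _ 1 volume

lemma fourierAt_fourierInvL1 (ξ : V) (ψ : 𝓢(V, ℂ)) : fourierAt ξ (fourierInvL1 ψ) = ψ ξ := by
  rw [fourierAt_eq_of_ae_eq (coeFn_fourierInvL1 ψ), ← SchwartzMap.fourier_coe,
    FourierTransform.fourier_fourierInv_eq]

variable (V) in
/-- The inverse Fourier transform of the unit cutoff at the origin. Dilating and modulating it gives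
the inverse Fourier transforms of all other cutoffs. -/
def cutoffKernel : 𝓢(V, ℂ) := 𝓕⁻ (cutoff (0 : V) one_pos)

lemma coeFn_fourierInvL1_cutoff_zero_one :
    fourierInvL1 (cutoff (0 : V) one_pos) =ᵐ[volume] cutoffKernel V :=
  coeFn_fourierInvL1 _

lemma fourierInv_cutoff (ξ₀ x : V) {r : ℝ} (hr : 0 < r) :
    (𝓕⁻ (cutoff ξ₀ hr) : 𝓢(V, ℂ)) x =
      r ^ Module.finrank ℝ V • 𝐞 ⟪ξ₀, x⟫ • cutoffKernel V (r • x) := by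
  simp only [cutoffKernel, SchwartzMap.fourierInv_coe, Real.fourierInv_eq]
  calc ∫ ξ, 𝐞 ⟪ξ, x⟫ • cutoff ξ₀ hr ξ
      = ∫ ξ, 𝐞 ⟪r • r⁻¹ • ξ + ξ₀, x⟫ • cutoff 0 one_pos (r⁻¹ • ξ) := by
        rw [← integral_add_right_eq_self _ ξ₀]
        simp only [cutoff_eq_cutoff_zero_one ξ₀ _ hr, add_sub_cancel_right, smul_inv_smul₀ hr.ne']
    _ = r ^ Module.finrank ℝ V • ∫ η, 𝐞 ⟪r • η + ξ₀, x⟫ • cutoff 0 one_pos η :=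
        Measure.integral_comp_inv_smul_of_nonneg volume
          (fun η => 𝐞 ⟪r • η + ξ₀, x⟫ • cutoff 0 one_pos η) hr.le
    _ = _ := by
        congr 1
        rw [Circle.smul_def, ← integral_smul]
        simp only [← Circle.smul_def, ← mul_smul, ← AddChar.map_add_eq_mul, inner_add_left,
          real_inner_smul_left, real_inner_smul_right, add_comm]

lemma norm_translate_sub_smul {f : V →₁[volume] ℂ} {φ : V → ℂ} (hf : f =ᵐ[volume] φ)
    (y : V) (a : ℂ) : ‖translate y f - a • f‖ = ∫ x, ‖φ (x - y) - a * φ x‖ := by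
  rw [L1.norm_eq_integral_norm]
  refine integral_congr_ae ?_
  filter_upwards [Lp.coeFn_sub (translate y f) (a • f), Lp.coeFn_smul a f, translate_ae_eq hf y,
    hf] with x hsub hsmul htranslate hx
  rw [hsub, Pi.sub_apply, hsmul, Pi.smul_apply, htranslate, hx, smul_eq_mul]

lemma norm_translate_sub_smul_fourierInvL1_cutoff (ξ₀ y : V) {r : ℝ} (hr : 0 < r) :
    ‖translate y (fourierInvL1 (cutoff ξ₀ hr)) -
        (𝐞 (-⟪y, ξ₀⟫) : ℂ) • fourierInvL1 (cutoff ξ₀ hr)‖ =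
      ‖translate (r • y) (fourierInvL1 (cutoff 0 one_pos)) -
        fourierInvL1 (cutoff (0 : V) one_pos)‖ := by
  set w := cutoffKernel V
  set d := Module.finrank ℝ V
  have hmod : ∀ x, 𝐞 ⟪ξ₀, x - y⟫ = 𝐞 (-⟪y, ξ₀⟫) * 𝐞 ⟪ξ₀, x⟫ := fun x => by
    rw [← AddChar.map_add_eq_mul, inner_sub_right, real_inner_comm y ξ₀, neg_add_eq_sub]
  have hpoint : ∀ x, ‖(𝓕⁻ (cutoff ξ₀ hr) : 𝓢(V, ℂ)) (x - y) -
      (𝐞 (-⟪y, ξ₀⟫) : ℂ) * (𝓕⁻ (cutoff ξ₀ hr) : 𝓢(V, ℂ)) x‖ =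
      r ^ d * ‖w (r • x - r • y) - w (r • x)‖ := fun x => by
    rw [fourierInv_cutoff, fourierInv_cutoff, hmod, smul_sub, mul_smul, ← smul_eq_mul,
      ← Circle.smul_def, smul_comm (𝐞 (-⟪y, ξ₀⟫)) (r ^ d), ← smul_sub, ← smul_sub, ← smul_sub,
      norm_smul, Circle.norm_smul, Circle.norm_smul, Real.norm_of_nonneg (by positivity)]
  have hright := norm_translate_sub_smul coeFn_fourierInvL1_cutoff_zero_one (r • y) 1
  simp only [one_smul, one_mul] at hright
  rw [hright, norm_translate_sub_smul (coeFn_fourierInvL1 _)]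
  simp only [hpoint]
  rw [integral_const_mul, Measure.integral_comp_smul_of_nonneg volume
    (fun x => ‖w (x - r • y) - w x‖) r (hR := hr.le), smul_eq_mul,
    mul_inv_cancel_left₀ (by positivity)]

lemma exists_norm_cutoff_sub_smul_conv_lt_one {K : V →₁[volume] ℂ} {ξ₀ : V}
    (hK : fourierAt ξ₀ K ≠ 0) :
    ∃ (r : ℝ) (hr : 0 < r), ‖fourierInvL1 (cutoff ξ₀ hr) -
      (fourierAt ξ₀ K)⁻¹ • conv K (fourierInvL1 (cutoff ξ₀ hr))‖ < 1 := by
  have hlim := (tendsto_integral_norm_mul_norm_translate_sub (L1.integrable_coeFn K)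
    (fourierInvL1 (cutoff 0 one_pos))).mono_left (nhdsWithin_le_nhds (s := Ioi 0))
  have hpos : 0 < ‖fourierAt ξ₀ K‖ := norm_pos_iff.2 hK
  obtain ⟨r, hsmall, hr⟩ :=
    ((hlim.eventually (gt_mem_nhds hpos)).and self_mem_nhdsWithin).exists
  refine ⟨r, hr, ?_⟩
  set v := fourierInvL1 (cutoff ξ₀ hr) with hv
  have hbound : ‖conv K v - fourierAt ξ₀ K • v‖ < ‖fourierAt ξ₀ K‖ := by
    refine (norm_conv_sub_fourierAt_smul_le K v ξ₀).trans_lt ?_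
    simpa only [hv, norm_translate_sub_smul_fourierInvL1_cutoff] using hsmall
  calc ‖v - (fourierAt ξ₀ K)⁻¹ • conv K v‖
      = ‖(fourierAt ξ₀ K)⁻¹ • (conv K v - fourierAt ξ₀ K • v)‖ := by
        rw [norm_sub_rev, smul_sub, inv_smul_smul₀ hK]
    _ = ‖conv K v - fourierAt ξ₀ K • v‖ / ‖fourierAt ξ₀ K‖ := by
        rw [norm_smul, norm_inv, inv_mul_eq_div]
    _ < 1 := (div_lt_one hpos).2 hbound

lemma conv_fourierInvL1_cutoff_zero {r : ℝ} (hr : 0 < r) (h : V →₁[volume] ℂ) :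
    conv (fourierInvL1 (cutoff 0 hr)) h =
      ∫ y, cutoffKernel V y • translate (r⁻¹ • y) h := by
  set w := cutoffKernel V
  have hscale := Measure.integral_comp_smul_of_nonneg volume
    (fun y => w y • translate (r⁻¹ • y) h) r (hR := hr.le)
  rw [eq_inv_smul_iff₀ (by positivity), ← integral_smul] at hscale
  rw [← hscale, conv]
  refine integral_congr_ae ?_
  filter_upwards [coeFn_fourierInvL1 (cutoff (0 : V) hr)] with y hy
  rw [hy, fourierInv_cutoff, inner_zero_left, AddChar.map_zero_eq_one, one_smul,
    inv_smul_smul₀ hr.ne', smul_assoc]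

lemma integral_cutoffKernel : ∫ y, cutoffKernel V y = 1 := by
  have h0 := fourierAt_fourierInvL1 0 (cutoff (0 : V) one_pos)
  rw [fourierAt_eq_of_ae_eq coeFn_fourierInvL1_cutoff_zero_one, Real.fourier_eq,
    cutoff_eq_one _ (Metric.mem_ball_self one_pos)] at h0
  simpa using h0

lemma exists_hasCompactSupport_dist_conv_lt (h : V →₁[volume] ℂ) {ε : ℝ} (hε : 0 < ε) :
    ∃ ψ : 𝓢(V, ℂ), HasCompactSupport ψ ∧ dist h (conv (fourierInvL1 ψ) h) < ε := by
  set w := cutoffKernel V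
  have hlim := (tendsto_integral_norm_mul_norm_translate_sub w.integrable h).mono_left
    (nhdsWithin_le_nhds (s := Ioi 0))
  obtain ⟨s, hsmall, hs⟩ := ((hlim.eventually (gt_mem_nhds hε)).and self_mem_nhdsWithin).exists
  have hintegrable := integrable_smul_translate w.integrable (continuous_const_smul s) h
  refine ⟨cutoff 0 (inv_pos.2 hs), hasCompactSupport_cutoff _ _, ?_⟩
  calc dist h (conv (fourierInvL1 (cutoff 0 (inv_pos.2 hs))) h)
      = ‖∫ y, w y • (translate (s • y) h - h)‖ := by
        simp only [smul_sub]
        rw [integral_sub hintegrable (w.integrable.smul_const h), integral_smul_const,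
          integral_cutoffKernel, one_smul, dist_eq_norm', conv_fourierInvL1_cutoff_zero,
          inv_inv]
    _ ≤ ∫ y, ‖w y • (translate (s • y) h - h)‖ := norm_integral_le_integral_norm _
    _ = ∫ y, ‖w y‖ * ‖translate (s • y) h - h‖ := by simp only [norm_smul]
    _ < ε := hsmall

/-! ### Wiener's theorem -/

lemma exists_conv_eq_fourierInvL1 {K : V →₁[volume] ℂ} (hK : ∀ ξ, fourierAt ξ K ≠ 0)
    {ψ : 𝓢(V, ℂ)} (hψ : HasCompactSupport ψ) : ∃ u, conv K u = fourierInvL1 ψ := by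
  choose r hr hdiv using fun ξ => exists_norm_cutoff_sub_smul_conv_lt_one (hK ξ)
  obtain ⟨t, θ, hsum, hsupp⟩ := exists_eq_sum_support_subset hψ
    (U := fun ξ => Metric.ball ξ (r ξ)) (fun _ => Metric.isOpen_ball)
    fun ξ => Metric.mem_ball_self (hr ξ)
  have hlocal : ∀ i, ∃ u, conv K u = fourierInvL1 (θ i) := fun i => by
    refine exists_conv_eq_of_norm_sub_smul_conv_lt_one (hdiv i) fun ξ => ?_
    simp only [fourierAt_fourierInvL1]
    exact or_iff_not_imp_left.2 fun hξ => cutoff_eq_one _ (hsupp i hξ)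
  choose u hu using hlocal
  refine ⟨∑ i, u i, ?_⟩
  rw [← convCLM_apply, map_sum, hsum, map_sum]
  exact Finset.sum_congr rfl fun i _ => hu i

theorem topologicalClosure_span_range_translate_eq_top {K : V →₁[volume] ℂ}
    (hK : ∀ ξ, fourierAt ξ K ≠ 0) :
    (Submodule.span ℂ (range fun y => translate y K)).topologicalClosure = ⊤ := by
  set S := Submodule.span ℂ (range fun y => translate y K)
  have hconv : ∀ h, conv h K ∈ S.topologicalClosure := conv_mem_of_translate_mem
    S.isClosed_topologicalClosure
    fun y => S.le_topologicalClosure (Submodule.subset_span (mem_range_self y))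
  refine eq_top_iff.2 fun h _ => ?_
  refine S.isClosed_topologicalClosure.closure_subset (Metric.mem_closure_iff.2 fun ε hε => ?_)
  obtain ⟨ψ, hψ, hdist⟩ := exists_hasCompactSupport_dist_conv_lt h hε
  obtain ⟨u, hu⟩ := exists_conv_eq_fourierInvL1 hK hψ
  refine ⟨_, ?_, hdist⟩
  rw [← hu, conv_assoc, conv_comm]
  exact hconv _

/-! ### Real combinations of translates -/

lemma norm_toL1_sub_sum_translate {f k : V → ℂ} (hf : Integrable f volume) (hk : Integrable k)
    {ι : Type*} [Fintype ι] (b : ι → ℂ) (y : ι → V) :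
    ‖hf.toL1 f - ∑ j, b j • translate (y j) (hk.toL1 k)‖ =
      ∫ t, ‖f t - ∑ j, b j * k (t - y j)‖ := by
  rw [L1.norm_eq_integral_norm]
  have hterm : ∀ᵐ t : V, ∀ j, (b j • translate (y j) (hk.toL1 k)) t = b j * k (t - y j) := by
    refine ae_all_iff.2 fun j => ?_
    filter_upwards [Lp.coeFn_smul (b j) (translate (y j) (hk.toL1 k)),
      translate_ae_eq hk.coeFn_toL1 (y j)] with t hsmul htranslate
    rw [hsmul, Pi.smul_apply, htranslate, smul_eq_mul]
  refine integral_congr_ae ?_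
  filter_upwards [hterm, hf.coeFn_toL1, Lp.coeFn_sub (hf.toL1 f) _,
    Lp.coeFn_finsetSum Finset.univ fun j => b j • translate (y j) (hk.toL1 k)]
    with t hterm hf hsub hsum
  rw [hsub, Pi.sub_apply, hf, hsum, Finset.sum_apply, Finset.sum_congr rfl fun j _ => hterm j]

lemma integral_abs_sub_sum_re_le {f k : V → ℝ} (hf : Integrable f) (hk : Integrable k)
    {ι : Type*} [Fintype ι] (b : ι → ℂ) (y : ι → V) :
    ∫ t, |f t - ∑ j, (b j).re * k (t - y j)| ≤ ∫ t, ‖(f t : ℂ) - ∑ j, b j * k (t - y j)‖ := by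
  refine integral_mono_of_nonneg (.of_forall fun _ => abs_nonneg _) ?_ (.of_forall fun t => ?_)
  · exact (hf.ofReal.sub (integrable_finsetSum _ fun j _ =>
      (hk.comp_sub_right (y j)).ofReal.const_mul (b j))).norm
  · refine (congrArg abs ?_).trans_le (abs_re_le_norm _)
    simp only [sub_re, re_sum, ofReal_re, re_mul_ofReal]

/-- Density in `L¹(V)` of the real span of the translates of `k`, in terms of functions rather than
their almost everywhere classes. -/
def TranslatesDense (k : V → ℝ) : Prop :=
  ∀ f : V → ℝ, Integrable f → ∀ ε : ℝ, 0 < ε → ∃ (N : ℕ) (a : Fin N → ℝ) (y : Fin N → V),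
    ∫ t, |f t - ∑ j, a j * k (t - y j)| < ε

lemma translatesDense_of_topologicalClosure_eq_top {k : V → ℝ} (hk : Integrable k)
    (hdense : (Submodule.span ℂ (range fun y => translate y
      (hk.ofReal.toL1 fun t => (k t : ℂ)))).topologicalClosure = ⊤) :
    TranslatesDense k := by
  intro f hf ε hε
  have hmem := hdense.ge (Submodule.mem_top (x := hf.ofReal.toL1 fun t => (f t : ℂ)))
  obtain ⟨s, hs, hdist⟩ := Metric.mem_closure_iff.1 hmem ε hε
  obtain ⟨N, b, g, rfl⟩ := Submodule.mem_span_set'.1 hs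
  choose y hy using fun j => (g j).2
  simp only [← hy, dist_eq_norm] at hdist
  rw [norm_toL1_sub_sum_translate] at hdist
  exact ⟨N, fun j => (b j).re, y, (integral_abs_sub_sum_re_le hf hk b y).trans_lt hdist⟩

lemma TranslatesDense.toL1_mem_topologicalClosure {k : V → ℝ} (hdense : TranslatesDense k)
    (hk : Integrable k) {f : V → ℝ} (hf : Integrable f volume) :
    hf.ofReal.toL1 (fun t => (f t : ℂ)) ∈ (Submodule.span ℂ (range fun y => translate y
      (hk.ofReal.toL1 fun t => (k t : ℂ)))).topologicalClosure := by
  refine Metric.mem_closure_iff.2 fun ε hε => ?_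
  obtain ⟨N, a, y, hlt⟩ := hdense f hf ε hε
  refine ⟨∑ j, (a j : ℂ) • translate (y j) (hk.ofReal.toL1 fun t => (k t : ℂ)),
    Submodule.sum_mem _ fun j _ => Submodule.smul_mem _ _
      (Submodule.subset_span (mem_range_self (y j))), ?_⟩
  rw [dist_eq_norm, norm_toL1_sub_sum_translate]
  convert hlt using 3 with t
  rw [← Real.norm_eq_abs, ← norm_real]
  push_cast
  rfl

lemma fourierAt_toL1_ofReal {f : V → ℝ} (hf : Integrable f volume) (ξ : V) :
    fourierAt ξ (hf.ofReal.toL1 fun t => (f t : ℂ)) = 𝓕 (fun t => (f t : ℂ)) ξ :=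
  fourierAt_eq_of_ae_eq hf.ofReal.coeFn_toL1 ξ

lemma fourierAt_eq_zero_of_mem_topologicalClosure {K F : V →₁[volume] ℂ} {ξ : V}
    (hK : fourierAt ξ K = 0)
    (hF : F ∈ (Submodule.span ℂ (range fun y => translate y K)).topologicalClosure) :
    fourierAt ξ F = 0 := by
  have hle : (Submodule.span ℂ (range fun y => translate y K)).topologicalClosure ≤
      (fourierAt ξ).ker := by
    refine Submodule.topologicalClosure_minimal _ (Submodule.span_le.2 ?_)
      (fourierAt ξ).isClosed_ker
    rintro _ ⟨y, rfl⟩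
    exact (fourierAt_translate ξ y K).trans (by rw [hK, smul_zero])
  exact hle hF

lemma integrable_exp_neg_sq_norm : Integrable fun t : V => Real.exp (-‖t‖ ^ 2) := by
  convert (GaussianFourier.integrable_cexp_neg_mul_sq_norm_add (V := V) (b := 1) (by simp) 0 0).re
    with t
  simp [← ofReal_pow, ← ofReal_neg, exp_ofReal_re]

lemma fourier_exp_neg_sq_norm_ne_zero (ξ : V) :
    𝓕 (fun t : V => (Real.exp (-‖t‖ ^ 2) : ℂ)) ξ ≠ 0 := by
  have hgaussian := fourier_gaussian_innerProductSpace (V := V) (b := 1) (by simp) ξ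
  simp only [neg_one_mul] at hgaussian
  push_cast
  rw [hgaussian]
  exact mul_ne_zero (by simp [cpow_def_of_ne_zero, Real.pi_ne_zero]) (exp_ne_zero _)

theorem translatesDense_iff_fourier_ne_zero {k : V → ℝ} (hk : Integrable k) :
    TranslatesDense k ↔ ∀ ξ, 𝓕 (fun t => (k t : ℂ)) ξ ≠ 0 := by
  simp only [← fourierAt_toL1_ofReal hk]
  refine ⟨fun hdense ξ hξ => fourier_exp_neg_sq_norm_ne_zero ξ ?_, fun hne =>
    translatesDense_of_topologicalClosure_eq_top hk
      (topologicalClosure_span_range_translate_eq_top hne)⟩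
  rw [← fourierAt_toL1_ofReal integrable_exp_neg_sq_norm]
  exact fourierAt_eq_zero_of_mem_topologicalClosure hξ
    (hdense.toL1_mem_topologicalClosure hk integrable_exp_neg_sq_norm)

/-! ### Logarithmic coordinates on the positive orthant -/

section LogCoordinates

variable {n : ℕ}

/-- The coordinatewise exponential `ℝⁿ → ℝⁿ_+`. -/
def expPi (t : Fin n → ℝ) : Fin n → ℝ := fun i => Real.exp (t i)

/-- The derivative of `expPi` at `t`, the diagonal map with entries `Real.exp (t i)`. -/
def expPiDeriv (t : Fin n → ℝ) : (Fin n → ℝ) →L[ℝ] (Fin n → ℝ) :=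
  .pi fun i => Real.exp (t i) • .proj i

lemma hasFDerivAt_expPi (t : Fin n → ℝ) : HasFDerivAt expPi (expPiDeriv t) t :=
  hasFDerivAt_pi'.2 fun i => (hasFDerivAt_apply i t).exp

lemma abs_det_expPiDeriv (t : Fin n → ℝ) : |(expPiDeriv t).det| = ∏ i, Real.exp (t i) := by
  have hdiag : (expPiDeriv t : (Fin n → ℝ) →ₗ[ℝ] (Fin n → ℝ)) =
      Matrix.toLin' (Matrix.diagonal fun i => Real.exp (t i)) := by
    ext v i
    simp [expPiDeriv, Matrix.mulVec_diagonal]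
  rw [ContinuousLinearMap.det, hdiag, LinearMap.det_toLin', Matrix.det_diagonal,
    abs_of_pos (Finset.prod_pos fun i _ => Real.exp_pos _)]

lemma expPi_injective : Function.Injective (expPi (n := n)) :=
  Real.exp_injective.comp_left

lemma expPi_log {x : Fin n → ℝ} (hx : x ∈ posOrth n) : expPi (fun i => Real.log (x i)) = x :=
  funext fun i => Real.exp_log (hx i)

lemma image_expPi_univ : expPi '' univ = posOrth n := by
  refine Subset.antisymm ?_ fun x hx => ⟨_, mem_univ _, expPi_log hx⟩
  rintro _ ⟨t, -, rfl⟩ i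
  exact Real.exp_pos (t i)

lemma setIntegral_posOrth {E : Type*} [NormedAddCommGroup E] [NormedSpace ℝ E]
    (g : (Fin n → ℝ) → E) :
    ∫ x in posOrth n, g x =
      ∫ t : EuclideanSpace ℝ (Fin n), (∏ i, Real.exp (t i)) • g (expPi t.ofLp) := by
  rw [← image_expPi_univ, integral_image_eq_integral_abs_det_fderiv_smul volume .univ
    (fun t _ => (hasFDerivAt_expPi t).hasFDerivWithinAt) expPi_injective.injOn, setIntegral_univ,
    ← (EuclideanSpace.volume_preserving_symm_measurableEquiv_toLp (Fin n)).integral_comp']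
  simp only [abs_det_expPiDeriv]
  rfl

lemma integrableOn_posOrth_iff {E : Type*} [NormedAddCommGroup E] [NormedSpace ℝ E]
    (g : (Fin n → ℝ) → E) :
    IntegrableOn g (posOrth n) ↔
      Integrable fun t : EuclideanSpace ℝ (Fin n) =>
        (∏ i, Real.exp (t i)) • g (expPi t.ofLp) := by
  rw [← image_expPi_univ, integrableOn_image_iff_integrableOn_abs_det_fderiv_smul volume .univ
    (fun t _ => (hasFDerivAt_expPi t).hasFDerivWithinAt) expPi_injective.injOn, integrableOn_univ,
    ← (EuclideanSpace.volume_preserving_symm_measurableEquiv_toLp (Fin n)).integrable_comp_emb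
      (MeasurableEquiv.measurableEmbedding _)]
  simp only [abs_det_expPiDeriv]
  rfl

/-- The function `f` on the positive orthant in the coordinates `t = log x`, weighted so that
`L¹_c(ℝⁿ_+)` becomes `L¹(ℝⁿ)`. -/
def logLift (c : Fin n → ℝ) (f : (Fin n → ℝ) → ℝ) (t : EuclideanSpace ℝ (Fin n)) : ℝ :=
  Real.exp (∑ i, c i * t i) * f (expPi t.ofLp)

lemma prod_exp_mul_prod_rpow (c t : Fin n → ℝ) :
    (∏ i, Real.exp (t i)) * ∏ i, expPi t i ^ (c i - 1) = Real.exp (∑ i, c i * t i) := by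
  rw [← Finset.prod_mul_distrib, Real.exp_sum]
  refine Finset.prod_congr rfl fun i _ => ?_
  rw [expPi, ← Real.exp_mul, ← Real.exp_add]
  ring_nf

lemma prod_exp_mul_prod_cpow (z : Fin n → ℂ) (t : Fin n → ℝ) :
    ((∏ i, Real.exp (t i) : ℝ) : ℂ) * ∏ i, (expPi t i : ℂ) ^ (z i - 1) =
      cexp (∑ i, z i * t i) := by
  rw [ofReal_prod, ← Finset.prod_mul_distrib, Complex.exp_sum]
  refine Finset.prod_congr rfl fun i _ => ?_
  rw [expPi, cpow_def_of_ne_zero (ofReal_ne_zero.2 (Real.exp_ne_zero _)),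
    ← ofReal_log (Real.exp_pos _).le, Real.log_exp, ofReal_exp, ← Complex.exp_add]
  ring_nf

lemma memL1w_iff_integrable_logLift (c : Fin n → ℝ) (f : (Fin n → ℝ) → ℝ) :
    MemL1w n c f ↔ Integrable (logLift c f) := by
  rw [MemL1w, integrableOn_posOrth_iff]
  simp only [smul_eq_mul, mul_comm (f _), ← mul_assoc, prod_exp_mul_prod_rpow]
  rfl

lemma setIntegral_abs_mul_prod_rpow (c : Fin n → ℝ) (f : (Fin n → ℝ) → ℝ) :
    ∫ x in posOrth n, |f x| * ∏ i, x i ^ (c i - 1) = ∫ t, |logLift c f t| := by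
  rw [setIntegral_posOrth]
  simp only [smul_eq_mul, mul_comm |f _|, ← mul_assoc, prod_exp_mul_prod_rpow, logLift, abs_mul,
    Real.abs_exp]

lemma exists_logLift_eq (c : Fin n → ℝ) (g : EuclideanSpace ℝ (Fin n) → ℝ) :
    ∃ f, logLift c f = g := by
  refine ⟨fun x => Real.exp (-∑ i, c i * Real.log (x i)) *
    g (WithLp.toLp 2 fun i => Real.log (x i)), funext fun t => ?_⟩
  simp only [logLift, expPi, Real.log_exp, ← mul_assoc, ← Real.exp_add, add_neg_cancel,
    Real.exp_zero, one_mul]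

lemma logLift_shift (c : Fin n → ℝ) (k : (Fin n → ℝ) → ℝ) (y t : EuclideanSpace ℝ (Fin n)) :
    logLift c (fun x => k fun i => Real.exp (-y i) * x i) t =
      Real.exp (∑ i, c i * y i) * logLift c k (t - y) := by
  have harg : (fun i => Real.exp (-y i) * expPi t.ofLp i) = expPi (t - y).ofLp := by
    ext i
    rw [expPi, expPi, ← Real.exp_add, PiLp.sub_apply, neg_add_eq_sub]
  simp only [logLift, harg, ← mul_assoc, ← Real.exp_add, ← Finset.sum_add_distrib, ← mul_add,
    PiLp.sub_apply, add_sub_cancel]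

lemma setIntegral_abs_sub_sum_shift (c : Fin n → ℝ) (f k : (Fin n → ℝ) → ℝ)
    {ι : Type*} [Fintype ι] (a : ι → ℝ) (y : ι → EuclideanSpace ℝ (Fin n)) :
    ∫ x in posOrth n, |f x - ∑ j, a j * k (fun i => Real.exp (-y j i) * x i)| *
        ∏ i, x i ^ (c i - 1) =
      ∫ t, |logLift c f t - ∑ j, a j * Real.exp (∑ i, c i * y j i) * logLift c k (t - y j)| := by
  rw [setIntegral_abs_mul_prod_rpow c fun x => f x - ∑ j, a j * k _]
  simp only [mul_assoc (a _), ← logLift_shift]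
  simp only [logLift, mul_sub, Finset.mul_sum, mul_left_comm (a _)]

/-- Density in `L¹_c(ℝⁿ_+)` of the span of the multiplicative shifts of `k`. -/
def MultShiftsDense (c : Fin n → ℝ) (k : (Fin n → ℝ) → ℝ) : Prop :=
  ∀ f : (Fin n → ℝ) → ℝ, MemL1w n c f → ∀ ε : ℝ, 0 < ε →
    ∃ (N : ℕ) (a : Fin N → ℝ) (p : Fin N → (Fin n → ℝ)), (∀ j, p j ∈ posOrth n) ∧
      ∫ x in posOrth n,
        |f x - ∑ j, a j * k (fun i => p j i * x i)| * ∏ i, x i ^ (c i - 1) < ε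

lemma exists_eq_exp_neg {p : Fin n → ℝ} (hp : p ∈ posOrth n) :
    ∃ y : EuclideanSpace ℝ (Fin n), p = fun i => Real.exp (-y i) :=
  ⟨WithLp.toLp 2 fun i => -Real.log (p i), by simp only [neg_neg, Real.exp_log (hp _)]⟩

lemma multShiftsDense_iff_translatesDense_logLift (c : Fin n → ℝ) (k : (Fin n → ℝ) → ℝ) :
    MultShiftsDense c k ↔ TranslatesDense (logLift c k) := by
  constructor
  · intro hdense g hg ε hε
    obtain ⟨f, rfl⟩ := exists_logLift_eq c g
    obtain ⟨N, a, p, hp, hlt⟩ := hdense f ((memL1w_iff_integrable_logLift c f).2 hg) ε hε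
    choose y hy using fun j => exists_eq_exp_neg (hp j)
    obtain rfl : p = fun j i => Real.exp (-y j i) := funext hy
    rw [setIntegral_abs_sub_sum_shift] at hlt
    exact ⟨N, _, y, hlt⟩
  · intro hdense f hf ε hε
    obtain ⟨N, a, y, hlt⟩ := hdense _ ((memL1w_iff_integrable_logLift c f).1 hf) ε hε
    refine ⟨N, fun j => a j * Real.exp (-∑ i, c i * y j i), fun j i => Real.exp (-y j i),
      fun j i => Real.exp_pos _, ?_⟩
    rw [setIntegral_abs_sub_sum_shift]
    simpa only [mul_assoc (a _), ← Real.exp_add, neg_add_cancel, Real.exp_zero, mul_one] using hlt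

lemma mellinT_eq_integral_cexp_mul (k : (Fin n → ℝ) → ℝ) (z : Fin n → ℂ) :
    mellinT n k z =
      ∫ t : EuclideanSpace ℝ (Fin n), cexp (∑ i, z i * t i) * k (expPi t.ofLp) := by
  rw [mellinT, setIntegral_posOrth]
  simp only [real_smul, ← mul_assoc, prod_exp_mul_prod_cpow]

lemma mellinT_eq_fourier_logLift (c : Fin n → ℝ) (k : (Fin n → ℝ) → ℝ)
    (η : EuclideanSpace ℝ (Fin n)) :
    mellinT n k (fun i => (c i : ℂ) + I * ((-(2 * Real.pi * η i) : ℝ) : ℂ)) =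
      𝓕 (fun t => (logLift c k t : ℂ)) η := by
  rw [mellinT_eq_integral_cexp_mul, Real.fourier_eq']
  refine integral_congr_ae (.of_forall fun t => ?_)
  have hexponent : ∑ i, ((c i : ℂ) + I * ((-(2 * Real.pi * η i) : ℝ) : ℂ)) * t i =
      ((-2 * Real.pi * ⟪t, η⟫ : ℝ) : ℂ) * I + ((∑ i, c i * t i : ℝ) : ℂ) := by
    rw [PiLp.inner_apply]
    push_cast
    rw [Finset.mul_sum, Finset.sum_mul, ← Finset.sum_add_distrib]
    refine Finset.sum_congr rfl fun i _ => ?_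
    simp only [RCLike.inner_apply, conj_trivial, ofReal_mul]
    ring
  beta_reduce
  rw [hexponent, Complex.exp_add, logLift, ofReal_mul (Real.exp _), ofReal_exp, smul_eq_mul,
    mul_assoc]

lemma forall_mellinT_ne_zero_iff (c : Fin n → ℝ) (k : (Fin n → ℝ) → ℝ) :
    (∀ ξ : Fin n → ℝ, mellinT n k (fun i => (c i : ℂ) + I * (ξ i : ℂ)) ≠ 0) ↔
      ∀ η, 𝓕 (fun t => (logLift c k t : ℂ)) η ≠ 0 := by
  have hsurj : Function.Surjective
      fun (η : EuclideanSpace ℝ (Fin n)) i => -(2 * Real.pi * η i) := fun ξ =>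
    ⟨WithLp.toLp 2 fun i => -ξ i / (2 * Real.pi), by ext i; field_simp⟩
  simp only [hsurj.forall, mellinT_eq_fourier_logLift]

end LogCoordinates

end WienerTauberian

/-- Lemma: for `k ∈ L¹_c(ℝ^n_+)`, the linear span of the multiplicative shifts
`k_p(x) = k(p₁x₁,…,pₙxₙ)`, `p ∈ ℝ^n_+`, is dense in `L¹_c(ℝ^n_+)` iff
`(Mk)(c + iξ) ≠ 0` for every `ξ ∈ ℝ^n`. -/
theorem span_mult_shifts_dense_L1_iff_mellin_no_zeros
    (n : ℕ) (hn : 1 ≤ n) (c : Fin n → ℝ) (k : (Fin n → ℝ) → ℝ)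
    (hk : MemL1w n c k) :
    (∀ f : (Fin n → ℝ) → ℝ, MemL1w n c f → ∀ ε : ℝ, 0 < ε →
        ∃ (N : ℕ) (a : Fin N → ℝ) (p : Fin N → (Fin n → ℝ)),
          (∀ j, p j ∈ posOrth n) ∧
          ∫ x in posOrth n,
              |f x - ∑ j, a j * k (fun i => p j i * x i)| * ∏ i, x i ^ (c i - 1) < ε) ↔
      ∀ ξ : Fin n → ℝ, mellinT n k (fun i => (c i : ℂ) + I * (ξ i : ℂ)) ≠ 0 := by
  have hintegrable := (WienerTauberian.memL1w_iff_integrable_logLift c k).1 hk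
  rw [WienerTauberian.forall_mellinT_ne_zero_iff,
    ← WienerTauberian.translatesDense_iff_fourier_ne_zero hintegrable]
  exact WienerTauberian.multShiftsDense_iff_translatesDense_logLift c k
end
end
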